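/- A discrete group G is C*-simple if and only if the only G-boundary contained in the state space of C*_λ(G) is the singleton {τ_λ}. -/

import Mathlib

noncomputable section
open scoped ENNReal ComplexOrder lp
open MeasureTheory
set_option maxHeartbeats 1000000
set_option synthInstance.maxHeartbeats 1000000

universe u

variable {G : Type u} [Group G]

theorem translat_mem (g : G) (f : ℓ²(G, ℂ)) : Memℓp (fun h => f (g⁻¹ * h)) 2 := by
  have hf : Summable fun i : G => ‖f i‖ ^ (2 : ℝ≥0∞).toReal :=
    (memℓp_gen_iff (by norm_num)).1 (lp.memℓp f)
  exact memℓp_gen ((Equiv.mulLeft g⁻¹).summable_iff.2 hf)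

/-- The left regular representation of `g ∈ G` as a linear isometric bijection of `ℓ²(G)`,
given by `(λ_g ξ)(h) = ξ(g⁻¹ h)`. -/
def lregE (g : G) : ℓ²(G, ℂ) ≃ₗᵢ[ℂ] ℓ²(G, ℂ) :=
{ toFun := fun f => ⟨fun h => f (g⁻¹ * h), translat_mem g f⟩
  invFun := fun f => ⟨fun h => f (g * h), by
    have := translat_mem g⁻¹ f; simpa using! this⟩
  map_add' := by intro f₁ f₂; ext h; simp [lp.coeFn_add]; rfl
  map_smul' := by intro c f; ext h; simp [lp.coeFn_smul]
  left_inv := by intro f; ext h; simp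
  right_inv := by intro f; ext h; simp
  norm_map' := by
    intro f
    rw [lp.norm_eq_tsum_rpow (by norm_num) f, lp.norm_eq_tsum_rpow (by norm_num)]
    congr 1
    exact (Equiv.mulLeft g⁻¹).tsum_eq (fun h => ‖f h‖ ^ (2 : ℝ≥0∞).toReal) }

/-- The left regular representation `λ` as bounded operators on `ℓ²(G)`. -/
def lreg (g : G) : ℓ²(G, ℂ) →L[ℂ] ℓ²(G, ℂ) :=
  (lregE g).toContinuousLinearEquiv.toContinuousLinearMap

variable (G) in
/-- The reduced group C*-algebra `C*_λ(G)`: the norm-closed star subalgebra of the algebra of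
bounded operators on `ℓ²(G)` generated by the image of the left regular representation. -/
def redCstar : StarSubalgebra ℂ (ℓ²(G, ℂ) →L[ℂ] ℓ²(G, ℂ)) :=
  (StarAlgebra.adjoin ℂ (Set.range (lreg (G := G)))).topologicalClosure

/-- `λ_g` as an element of the reduced group C*-algebra. -/
def uu (g : G) : redCstar G :=
  ⟨lreg g, StarSubalgebra.le_topologicalClosure _ (StarAlgebra.subset_adjoin ℂ _ ⟨g, rfl⟩)⟩

variable (G) in
/-- `G` is C*-simple: `C*_λ(G)` has no closed two-sided ideals other than `{0}` and the
whole algebra. -/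
def IsCstarSimple : Prop :=
  ∀ I : TwoSidedIdeal (redCstar G), IsClosed (I : Set (redCstar G)) → I = ⊥ ∨ I = ⊤

/-- The vector `δ_e ∈ ℓ²(G)`. -/
def deltaOne : ℓ²(G, ℂ) := letI := Classical.decEq G; lp.single 2 (1 : G) 1

variable (G) in
/-- The canonical tracial state `τ_λ(a) = ⟨a δ_e, δ_e⟩` on the reduced C*-algebra, as a
weak* continuous linear functional. -/
def tau : WeakDual ℂ (redCstar G) :=
  (innerSL ℂ (deltaOne (G := G))).comp
    ((ContinuousLinearMap.apply ℂ ℓ²(G, ℂ) (deltaOne (G := G))).comp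
      { toLinearMap := (redCstar G).subtype.toLinearMap, cont := continuous_subtype_val })

attribute [irreducible] redCstar lreg lregE deltaOne uu tau

/-- A state on `C*_λ(G)`: a unital positive (continuous) linear functional. -/
def IsState (φ : WeakDual ℂ (redCstar G)) : Prop :=
  φ 1 = 1 ∧ ∀ a : redCstar G, 0 ≤ φ (star a * a)

/-- The action of `G` on the dual of `C*_λ(G)`: `(g·φ)(a) = φ(λ_g⁻¹ a λ_g)`. -/
def dualAct (g : G) (φ : WeakDual ℂ (redCstar G)) : WeakDual ℂ (redCstar G) :=
{ toFun := fun a => φ (uu g⁻¹ * a * uu g)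
  map_add' := by
    intro a b
    show φ (uu g⁻¹ * (a + b) * uu g) = φ (uu g⁻¹ * a * uu g) + φ (uu g⁻¹ * b * uu g)
    rw [mul_add, add_mul, map_add]
  map_smul' := by
    intro c a
    show φ (uu g⁻¹ * (c • a) * uu g) = c • φ (uu g⁻¹ * a * uu g)
    rw [mul_smul_comm, smul_mul_assoc, _root_.map_smul]
  cont := (map_continuous φ).comp
      ((continuous_const.mul continuous_id).mul continuous_const) }

theorem dualAct_continuous (g : G) : Continuous (dualAct (G := G) g) := by
  apply WeakDual.continuous_of_continuous_eval
  intro a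
  exact WeakDual.eval_continuous (uu g⁻¹ * a * uu g)

variable (G) in
/-- A `G`-boundary in the dual space of `C*_λ(G)`: a weak* compact `G`-invariant set of
functionals such that every point mass lies in the weak* closure of the `G`-orbit of every
regular Borel probability measure on it. -/
def IsDualBoundary (B : Set (WeakDual ℂ (redCstar G))) : Prop :=
  B.Nonempty ∧ IsCompact B ∧
  ∃ hinv : ∀ (g : G) (φ : WeakDual ℂ (redCstar G)), φ ∈ B → dualAct g φ ∈ B,
  letI : MeasurableSpace B := borel B
  haveI : BorelSpace B := ⟨rfl⟩
  ∀ (μ : ProbabilityMeasure B) (x : B),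
    (⟨Measure.dirac x, Measure.dirac.isProbabilityMeasure⟩ : ProbabilityMeasure B) ∈
      closure {ν : ProbabilityMeasure B | ∃ g : G,
        ν = μ.map (f := fun y => (⟨dualAct g y.1, hinv g y.1 y.2⟩ : B))
          ((((dualAct_continuous g).comp continuous_subtype_val).subtype_mk
            (fun y => hinv g y.1 y.2)).measurable.aemeasurable)}



section Glasner

/-- Positive unital functionals on `C(X, ℝ)`. -/
def PX (X : Type*) [TopologicalSpace X] [CompactSpace X] : Set (WeakDual ℝ C(X, ℝ)) :=
  {ν | ν 1 = 1 ∧ ∀ f : C(X, ℝ), 0 ≤ f → 0 ≤ ν f}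

theorem PX_mono {X : Type*} [TopologicalSpace X] [CompactSpace X] {ν : WeakDual ℝ C(X, ℝ)}
    (h : ν ∈ PX X) {f g : C(X, ℝ)} (hfg : ∀ x, f x ≤ g x) : ν f ≤ ν g := by
  have := h.2 (g - f) (by intro x; simpa using hfg x)
  rw [map_sub] at this
  linarith

theorem PX_const {X : Type*} [TopologicalSpace X] [CompactSpace X] {ν : WeakDual ℝ C(X, ℝ)}
    (h : ν ∈ PX X) (c : ℝ) : ν (c • (1 : C(X, ℝ))) = c := by
  rw [map_smul, h.1]; simp

theorem PX_norm {X : Type*} [TopologicalSpace X] [CompactSpace X] {ν : WeakDual ℝ C(X, ℝ)}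
    (h : ν ∈ PX X) (f : C(X, ℝ)) : |ν f| ≤ ‖f‖ := by
  rw [abs_le]
  constructor
  · rw [← PX_const h (-‖f‖)]
    exact PX_mono h (fun x => by simpa using (abs_le.1 (f.norm_coe_le_norm x)).1)
  · refine le_of_le_of_eq ?_ (PX_const h (‖f‖))
    exact PX_mono h (fun x => by simpa using (abs_le.1 (f.norm_coe_le_norm x)).2)

theorem PX_compact (X : Type*) [TopologicalSpace X] [CompactSpace X] : IsCompact (PX X) := by
  refine (WeakDual.isCompact_closedBall (𝕜 := ℝ) (0 : StrongDual ℝ C(X, ℝ)) 1).of_isClosed_subset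
    ?_ ?_
  · have : PX X = {ν | ν 1 = 1} ∩ ⋂ f : C(X, ℝ), ⋂ (_ : 0 ≤ f), {ν | 0 ≤ ν f} := by
      ext ν; simp [PX]
    rw [this]
    refine IsClosed.inter (isClosed_eq (WeakDual.eval_continuous _) continuous_const) ?_
    exact isClosed_iInter fun f => isClosed_iInter fun _ =>
      isClosed_le continuous_const (WeakDual.eval_continuous _)
  · intro ν hν
    simp only [Set.mem_preimage, Metric.mem_closedBall, dist_zero_right]
    refine ContinuousLinearMap.opNorm_le_bound _ zero_le_one fun f => ?_
    simpa using! PX_norm hν f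

theorem PX_convex (X : Type*) [TopologicalSpace X] [CompactSpace X] : Convex ℝ (PX X) := by
  intro μ hμ ν hν a b ha hb hab
  constructor
  · show a * μ 1 + b * ν 1 = 1
    rw [hμ.1, hν.1]; linarith
  · intro f hf
    show 0 ≤ a * μ f + b * ν f
    have := hμ.2 f hf
    have := hν.2 f hf
    positivity

variable {E : Type*} [AddCommGroup E] [Module ℝ E] [TopologicalSpace E]

/-- Restriction of a functional to a set. -/
def restr (X : Set E) (l : E →L[ℝ] ℝ) : C(X, ℝ) :=
  ⟨fun x => l x, l.continuous.comp continuous_subtype_val⟩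

/-- `b` is a barycenter of `ν`. -/
def IsBar (X : Set E) [CompactSpace X] (ν : WeakDual ℝ C(X, ℝ)) (b : E) : Prop :=
  ∀ l : E →L[ℝ] ℝ, ν (restr X l) = l b

theorem exists_bar {K X : Set E} (hK : IsCompact K) (hc : Convex ℝ K)
    [CompactSpace X] (hX : X ⊆ K) {ν : WeakDual ℝ C(X, ℝ)} (hν : ν ∈ PX X) :
    ∃ b ∈ K, IsBar X ν b := by
  have := hK.inter_iInter_nonempty (fun l : E →L[ℝ] ℝ => {b | ν (restr X l) = l b})
    (fun l => isClosed_eq continuous_const l.continuous) ?_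
  · obtain ⟨b, hb, hb'⟩ := this
    exact ⟨b, hb, fun l => by simpa using Set.mem_iInter.1 hb' l⟩
  classical
  intro u
  let F : E →L[ℝ] (u → ℝ) := ContinuousLinearMap.pi fun i => i.1
  let p : u → ℝ := fun i => ν (restr X i.1)
  by_cases hp : p ∈ F '' K
  · obtain ⟨b, hb, hb'⟩ := hp
    refine ⟨b, hb, ?_⟩
    simp only [Set.mem_iInter]
    intro l hl
    exact (congrFun hb' ⟨l, hl⟩).symm
  exfalso
  obtain ⟨f, c, hf, hcp⟩ := geometric_hahn_banach_closed_point
    (hc.linear_image F.toLinearMap) (hK.image F.continuous).isClosed hp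
  have h1 : ν (restr X (f.comp F)) = f p := by
    have e : restr X (f.comp F) = ∑ i : u, f (fun j => if i = j then 1 else 0) • restr X i.1 := by
      ext x
      have := LinearMap.pi_apply_eq_sum_univ f.toLinearMap (F x)
      simp only [restr, ContinuousMap.coe_mk, ContinuousMap.coe_sum, ContinuousMap.coe_smul,
        Finset.sum_apply, Pi.smul_apply, smul_eq_mul]
      refine this.trans ?_
      exact Finset.sum_congr rfl fun i _ => by rw [smul_eq_mul, mul_comm]; rfl
    rw [e, map_sum]
    refine Eq.trans ?_ (LinearMap.pi_apply_eq_sum_univ f.toLinearMap p).symm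
    exact Finset.sum_congr rfl fun i _ => by rw [map_smul, smul_eq_mul, smul_eq_mul, mul_comm]; rfl
  have h2 : ν (restr X (f.comp F)) ≤ c := by
    rw [← PX_const hν c]
    refine PX_mono hν fun x => ?_
    have := hf (F x) ⟨x, hX x.2, rfl⟩
    simpa [restr] using this.le
  linarith

end Glasner


section Glasner2
set_option linter.unusedSectionVars false

variable {E : Type*} [AddCommGroup E] [Module ℝ E] [TopologicalSpace E]
  [IsTopologicalAddGroup E] [ContinuousSMul ℝ E] [LocallyConvexSpace ℝ E] [T2Space E]

theorem bar_unique {X : Set E} [CompactSpace X] {ν : WeakDual ℝ C(X, ℝ)} {b c : E}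
    (hb : IsBar X ν b) (hc : IsBar X ν c) : b = c := by
  by_contra hne
  obtain ⟨f, hf⟩ := geometric_hahn_banach_point_point hne
  rw [← hb f, ← hc f] at hf
  exact lt_irrefl _ hf

/-- The functional `k ↦ ν (f * k) / t`. -/
def wt {X : Type*} [TopologicalSpace X] [CompactSpace X] (ν : WeakDual ℝ C(X, ℝ)) (f : C(X, ℝ))
    (t : ℝ) : WeakDual ℝ C(X, ℝ) :=
  StrongDual.toWeakDual (t⁻¹ • (WeakDual.toStrongDual ν).comp (ContinuousLinearMap.mul ℝ C(X, ℝ) f))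

theorem wt_apply {X : Type*} [TopologicalSpace X] [CompactSpace X] (ν : WeakDual ℝ C(X, ℝ))
    (f k : C(X, ℝ)) (t : ℝ) : wt ν f t k = t⁻¹ * ν (f * k) := rfl

theorem wt_mem {X : Type*} [TopologicalSpace X] [CompactSpace X] {ν : WeakDual ℝ C(X, ℝ)}
    (hν : ν ∈ PX X) {f : C(X, ℝ)} (hf : 0 ≤ f) (h : 0 < ν f) : wt ν f (ν f) ∈ PX X := by
  constructor
  · rw [wt_apply, mul_one, inv_mul_cancel₀ h.ne']
  · intro k hk
    rw [wt_apply]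
    exact mul_nonneg (inv_nonneg.2 h.le) (hν.2 _ (mul_nonneg hf hk))

theorem bar_mul_aux {K X : Set E} (hK : IsCompact K) (hc : Convex ℝ K)
    [CompactSpace X] (hX : X ⊆ K) {ν : WeakDual ℝ C(X, ℝ)} (hν : ν ∈ PX X) {x : E}
    (hx : x ∈ K.extremePoints ℝ) (hb : IsBar X ν x) (f : C(X, ℝ))
    (hf : ∀ y, 1 / 4 ≤ f y ∧ f y ≤ 3 / 4) (l : E →L[ℝ] ℝ) :
    ν (f * restr X l) = ν f * l x := by
  have t1 : 1 / 4 ≤ ν f := by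
    rw [← PX_const hν (1 / 4)]
    exact PX_mono hν fun y => by simpa using (hf y).1
  have t2 : ν f ≤ 3 / 4 := by
    rw [← PX_const hν (3 / 4)]
    exact PX_mono hν fun y => by simpa using (hf y).2
  have e1 : ν (1 - f) = 1 - ν f := by rw [map_sub, hν.1]
  have h1 := wt_mem hν (f := f) (fun y => by show 0 ≤ f y; linarith [(hf y).1]) (by linarith)
  have h2 := wt_mem hν (f := 1 - f) (fun y => by show 0 ≤ 1 - f y; linarith [(hf y).2])
    (by linarith)
  obtain ⟨b1, hb1, hB1⟩ := exists_bar hK hc hX h1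
  obtain ⟨b2, hb2, hB2⟩ := exists_bar hK hc hX h2
  have hcomb : IsBar X ν (ν f • b1 + (1 - ν f) • b2) := by
    intro l
    rw [map_add, map_smul, map_smul, ← hB1 l, ← hB2 l, wt_apply, wt_apply, e1, smul_eq_mul,
      smul_eq_mul, ← mul_assoc, ← mul_assoc, mul_inv_cancel₀ (by linarith),
      mul_inv_cancel₀ (by linarith), one_mul, one_mul, ← map_add]
    congr 1
    ring
  have hxe := bar_unique hb hcomb
  have := hx.2 hb1 hb2 (show x ∈ openSegment ℝ b1 b2 from
    ⟨ν f, 1 - ν f, by linarith, by linarith, by ring, hxe.symm⟩)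
  have h3 := hB1 l
  rw [this, wt_apply] at h3
  rw [← h3, ← mul_assoc, mul_inv_cancel₀ (by linarith), one_mul]

theorem bar_mul {K X : Set E} (hK : IsCompact K) (hc : Convex ℝ K)
    [CompactSpace X] (hX : X ⊆ K) {ν : WeakDual ℝ C(X, ℝ)} (hν : ν ∈ PX X) {x : E}
    (hx : x ∈ K.extremePoints ℝ) (hb : IsBar X ν x) (f : C(X, ℝ)) (l : E →L[ℝ] ℝ) :
    ν (f * restr X l) = ν f * l x := by
  set c : ℝ := (4 * (‖f‖ + 1))⁻¹ with hcdef
  have hcpos : 0 < c := by positivity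
  have hbd : ∀ y, |c * f y| ≤ 1 / 4 := by
    intro y
    rw [abs_mul, abs_of_pos hcpos]
    have h1 : |f y| ≤ ‖f‖ + 1 := (f.norm_coe_le_norm y).trans (by linarith)
    calc c * |f y| ≤ c * (‖f‖ + 1) := by gcongr
      _ = 1 / 4 := by rw [hcdef]; field_simp
  have key := bar_mul_aux hK hc hX hν hx hb ((1 / 2 : ℝ) • 1 + c • f) (fun y => by
    have := abs_le.1 (hbd y)
    simp only [ContinuousMap.add_apply, ContinuousMap.smul_apply, ContinuousMap.one_apply,
      smul_eq_mul]
    constructor <;> linarith) l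
  rw [add_mul, map_add, map_add, PX_const hν, smul_mul_assoc, smul_mul_assoc, map_smul, map_smul,
    map_smul, one_mul, hb l, smul_eq_mul, smul_eq_mul, smul_eq_mul] at key
  have : c * (ν (f * restr X l)) = c * (ν f * l x) := by linarith
  exact mul_left_cancel₀ hcpos.ne' this

theorem bar_extreme {K X : Set E} (hK : IsCompact K) (hc : Convex ℝ K)
    [CompactSpace X] (hX : X ⊆ K) {ν : WeakDual ℝ C(X, ℝ)} (hν : ν ∈ PX X) {x : E}
    (hx : x ∈ K.extremePoints ℝ) (hxX : x ∈ X) (hb : IsBar X ν x) (h : C(X, ℝ)) :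
    ν h = h ⟨x, hxX⟩ := by
  let A : Subalgebra ℝ C(X, ℝ) :=
    { carrier := {f | ∀ k, ν (k * f) = ν k * f ⟨x, hxX⟩}
      mul_mem' := by
        intro a b ha hb k
        simp only [Set.mem_ofPred_eq] at ha hb
        rw [← mul_assoc, hb, ha, ContinuousMap.mul_apply, mul_assoc]
      add_mem' := by
        intro a b ha hb k
        simp only [Set.mem_ofPred_eq] at ha hb
        rw [mul_add, map_add, hb, ha, ContinuousMap.add_apply, mul_add]
      algebraMap_mem' := by
        intro r k
        rw [Algebra.algebraMap_eq_smul_one, mul_smul_comm, map_smul, mul_one]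
        simp [mul_comm] }
  have hsep : A.SeparatesPoints := by
    intro y z hyz
    obtain ⟨l, hl⟩ := geometric_hahn_banach_point_point
      (show (y : E) ≠ z from fun h => hyz (Subtype.ext h))
    exact ⟨_, ⟨restr X l, fun k => bar_mul hK hc hX hν hx hb k l, rfl⟩, hl.ne⟩
  have htop := ContinuousMap.subalgebra_topologicalClosure_eq_top_of_separatesPoints A hsep
  have hcl : IsClosed {f : C(X, ℝ) | ν f = f ⟨x, hxX⟩} :=
    isClosed_eq (map_continuous ν) (continuous_eval_const _)
  have hsub : (A : Set C(X, ℝ)) ⊆ {f : C(X, ℝ) | ν f = f ⟨x, hxX⟩} := by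
    intro f hf
    have := hf 1
    rwa [one_mul, hν.1, one_mul] at this
  have hmem : h ∈ A.topologicalClosure := by rw [htop]; trivial
  exact closure_minimal hsub hcl hmem

/-- Barycenters of a closed set of positive unital functionals form a compact set. -/
theorem bars_compact {K X : Set E} (hK : IsCompact K) [CompactSpace X]
    {Q : Set (WeakDual ℝ C(X, ℝ))} (hQ : IsCompact Q) :
    IsCompact {b | b ∈ K ∧ ∃ ν ∈ Q, IsBar X ν b} := by
  have h1 : IsCompact ((Q ×ˢ K) ∩ {p : WeakDual ℝ C(X, ℝ) × E | IsBar X p.1 p.2}) := by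
    refine (hQ.prod hK).inter_right ?_
    have : {p : WeakDual ℝ C(X, ℝ) × E | IsBar X p.1 p.2} =
        ⋂ l : E →L[ℝ] ℝ, {p | p.1 (restr X l) = l p.2} := by
      ext p; simp [IsBar]
    rw [this]
    exact isClosed_iInter fun l => isClosed_eq
      ((WeakDual.eval_continuous (restr X l)).comp continuous_fst) (l.continuous.comp continuous_snd)
  convert h1.image continuous_snd using 1
  ext b
  constructor
  · rintro ⟨hb, ν, hν, h⟩
    exact ⟨(ν, b), ⟨⟨hν, hb⟩, h⟩, rfl⟩
  · rintro ⟨⟨ν, b'⟩, ⟨⟨hν, hb⟩, h⟩, rfl⟩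
    exact ⟨hb, ν, hν, h⟩

/-- precomposition with a self map -/
def pull {X : Type*} [TopologicalSpace X] [CompactSpace X] (ν : WeakDual ℝ C(X, ℝ)) (σ : C(X, X)) :
    WeakDual ℝ C(X, ℝ) :=
  StrongDual.toWeakDual ((WeakDual.toStrongDual ν).comp
    ({ toFun := fun f => f.comp σ
       map_add' := fun _ _ => rfl
       map_smul' := fun _ _ => rfl
       cont := ContinuousMap.continuous_precomp σ } : C(X, ℝ) →L[ℝ] C(X, ℝ)))

theorem pull_apply {X : Type*} [TopologicalSpace X] [CompactSpace X] (ν : WeakDual ℝ C(X, ℝ))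
    (σ : C(X, X)) (f : C(X, ℝ)) : pull ν σ f = ν (f.comp σ) := rfl

theorem pull_mem {X : Type*} [TopologicalSpace X] [CompactSpace X] {ν : WeakDual ℝ C(X, ℝ)}
    (hν : ν ∈ PX X) (σ : C(X, X)) : pull ν σ ∈ PX X :=
  ⟨by rw [pull_apply]; exact hν.1, fun f hf => hν.2 _ (fun y => hf (σ y))⟩

/-- A minimal compact convex invariant set. -/
structure MinConv (T : G → E →L[ℝ] E) (K : Set E) : Prop where
  ne : K.Nonempty
  cpt : IsCompact K
  cvx : Convex ℝ K
  inv : ∀ g, ∀ x ∈ K, T g x ∈ K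
  min : ∀ K' ⊆ K, K'.Nonempty → IsCompact K' → Convex ℝ K' → (∀ g, ∀ x ∈ K', T g x ∈ K') → K' = K

theorem exists_minConv (T : G → E →L[ℝ] E) (K : Set E) (ne : K.Nonempty) (cpt : IsCompact K)
    (cvx : Convex ℝ K) (inv : ∀ g, ∀ x ∈ K, T g x ∈ K) : ∃ K' ⊆ K, MinConv T K' := by
  let S : Set (Set E) := {K' | K' ⊆ K ∧ K'.Nonempty ∧ IsCompact K' ∧ Convex ℝ K' ∧
    ∀ g, ∀ x ∈ K', T g x ∈ K'}
  obtain ⟨m, hm⟩ := zorn_superset_nonempty S (fun c hc hchain hcne => by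
    refine ⟨⋂₀ c, ⟨?_, ?_, ?_, ?_, ?_⟩, fun s hs => Set.sInter_subset_of_mem hs⟩
    · obtain ⟨s, hs⟩ := hcne
      exact (Set.sInter_subset_of_mem hs).trans (hc hs).1
    · have := hcne.to_subtype
      rw [Set.sInter_eq_iInter]
      refine IsCompact.nonempty_iInter_of_directed_nonempty_isCompact_isClosed _ ?_
        (fun i => (hc i.2).2.1) (fun i => (hc i.2).2.2.1) (fun i => (hc i.2).2.2.1.isClosed)
      intro a b
      rcases hchain.total a.2 b.2 with h | h
      · exact ⟨a, subset_rfl, h⟩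
      · exact ⟨b, h, subset_rfl⟩
    · obtain ⟨s, hs⟩ := hcne
      exact (hc hs).2.2.1.of_isClosed_subset
        (isClosed_sInter fun t ht => (hc ht).2.2.1.isClosed) (Set.sInter_subset_of_mem hs)
    · exact convex_sInter fun t ht => (hc ht).2.2.2.1
    · intro g x hx t ht
      exact (hc ht).2.2.2.2 g x (hx t ht)) K ⟨subset_rfl, ne, cpt, cvx, inv⟩
  refine ⟨m, hm.1, hm.2.1.2.1, hm.2.1.2.2.1, hm.2.1.2.2.2.1, hm.2.1.2.2.2.2, ?_⟩
  intro K' hK' h1 h2 h3 h4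
  exact subset_antisymm hK' (hm.2.2 ⟨hK'.trans hm.1, h1, h2, h3, h4⟩ hK')

end Glasner2


section Glasner3
set_option linter.unusedSectionVars false
variable {E : Type*} [AddCommGroup E] [Module ℝ E] [TopologicalSpace E]
  [IsTopologicalAddGroup E] [ContinuousSMul ℝ E] [LocallyConvexSpace ℝ E] [T2Space E]

/-- restricted action -/
def actX {T : G → E →L[ℝ] E} {X : Set E} (hinv : ∀ g, ∀ x ∈ X, T g x ∈ X) (g : G) : C(X, X) :=
  ⟨fun x => ⟨T g x, hinv g x x.2⟩, ((T g).continuous.comp continuous_subtype_val).subtype_mk _⟩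

/-- Functional form of a boundary. -/
structure BdryFn (T : G → E →L[ℝ] E) (X : Set E) : Prop where
  ne : X.Nonempty
  cpt : IsCompact X
  inv : ∀ g, ∀ x ∈ X, T g x ∈ X
  sp : ∀ [CompactSpace X], ∀ ν ∈ PX X, ∀ x : X, ∀ h : C(X, ℝ), 0 ≤ h → h x = 0 → ∀ ε > 0,
    ∃ g, ν (h.comp (actX inv g)) < ε

theorem bar_pull {T : G → E →L[ℝ] E} {X : Set E} [CompactSpace X]
    (hinv : ∀ g, ∀ x ∈ X, T g x ∈ X) (g : G) {ν : WeakDual ℝ C(X, ℝ)} {b : E} (hb : IsBar X ν b) :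
    IsBar X (pull ν (actX hinv g)) (T g b) := fun l => hb (l.comp (T g))

theorem glasner_aux {T : G → E →L[ℝ] E} (hT1 : ∀ x, T 1 x = x)
    (hTm : ∀ g h x, T (g * h) x = T g (T h x)) {K : Set E} (hK : MinConv T K) {X : Set E}
    [CompactSpace X] (hXK : X ⊆ K) (hinv : ∀ g, ∀ x ∈ X, T g x ∈ X)
    (ν : WeakDual ℝ C(X, ℝ)) (hν : ν ∈ PX X) (x : X)
    (hx : (x : E) ∈ K.extremePoints ℝ) (h : C(X, ℝ)) (hx0 : h x = 0) (ε : ℝ)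
    (hε : 0 < ε) : ∃ g, ν (h.comp (actX hinv g)) < ε := by
  by_contra hcon
  push Not at hcon
  let Q : Set (WeakDual ℝ C(X, ℝ)) := PX X ∩ ⋂ g, {ν | ε ≤ ν (h.comp (actX hinv g))}
  have hQm : ∀ μ, μ ∈ Q ↔ μ ∈ PX X ∧ ∀ g, ε ≤ μ (h.comp (actX hinv g)) := by
    intro μ; simp [Q]
  have hQ : IsCompact Q := (PX_compact X).inter_right
    (isClosed_iInter fun g => isClosed_le continuous_const (WeakDual.eval_continuous _))
  have hmin := hK.min {b | b ∈ K ∧ ∃ ν ∈ Q, IsBar X ν b} (fun b hb => hb.1) (by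
      obtain ⟨b, hb, hb'⟩ := exists_bar hK.cpt hK.cvx hXK hν
      exact ⟨b, hb, ν, (hQm _).2 ⟨hν, hcon⟩, hb'⟩)
    (bars_compact hK.cpt hQ) (by
      rintro b ⟨hb, μ, hμ, hbμ⟩ c ⟨hc, μ', hμ', hcμ⟩ s t hs ht hst
      refine ⟨hK.cvx hb hc hs ht hst, s • μ + t • μ', ?_, ?_⟩
      · rw [hQm] at hμ hμ' ⊢
        refine ⟨PX_convex X hμ.1 hμ'.1 hs ht hst, fun g => ?_⟩
        show ε ≤ s * μ _ + t * μ' _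
        have h1 := mul_le_mul_of_nonneg_left (hμ.2 g) hs
        have h2 := mul_le_mul_of_nonneg_left (hμ'.2 g) ht
        have : ε = s * ε + t * ε := by rw [← add_mul, hst, one_mul]
        linarith
      · intro l
        show s * μ _ + t * μ' _ = _
        rw [hbμ l, hcμ l]; simp) (by
      rintro g b ⟨hb, μ, hμ, hbμ⟩
      refine ⟨hK.inv g b hb, pull μ (actX hinv g), ?_, bar_pull hinv g hbμ⟩
      rw [hQm] at hμ ⊢
      refine ⟨pull_mem hμ.1 _, fun k => ?_⟩
      rw [pull_apply]
      convert hμ.2 (k * g) using 2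
      ext y
      show h _ = h _
      congr 1
      exact Subtype.ext (hTm k g y).symm)
  have hxm : (x : E) ∈ {b | b ∈ K ∧ ∃ ν ∈ Q, IsBar X ν b} := by rw [hmin]; exact hXK x.2
  obtain ⟨_, μ, hμ, hb⟩ := hxm
  rw [hQm] at hμ
  have h1 := bar_extreme hK.cpt hK.cvx hXK hμ.1 hx x.2 hb (h.comp (actX hinv 1))
  have h2 := hμ.2 1
  rw [h1] at h2
  have h3 : (h.comp (actX hinv 1)) ⟨x, x.2⟩ = h x := by
    show h _ = h x
    congr 1
    exact Subtype.ext (hT1 x)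
  linarith

theorem glasner {T : G → E →L[ℝ] E} (hT1 : ∀ x, T 1 x = x)
    (hTm : ∀ g h x, T (g * h) x = T g (T h x)) {K : Set E} (hK : MinConv T K) :
    BdryFn T (closure (K.extremePoints ℝ)) := by
  have hsub : closure (K.extremePoints ℝ) ⊆ K :=
    closure_minimal extremePoints_subset hK.cpt.isClosed
  have hTi : ∀ g x, T g⁻¹ (T g x) = x := fun g x => by rw [← hTm]; simp [hT1]
  have hTi' : ∀ g x, T g (T g⁻¹ x) = x := fun g x => by rw [← hTm]; simp [hT1]
  have hinv0 : ∀ g, ∀ x ∈ K.extremePoints ℝ, T g x ∈ K.extremePoints ℝ := by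
    intro g x hx
    refine ⟨hK.inv g x hx.1, fun y hy z hz hyz => ?_⟩
    have := hx.2 (hK.inv g⁻¹ y hy) (hK.inv g⁻¹ z hz) (by
      obtain ⟨a, b, ha, hb, hab, h⟩ := hyz
      refine ⟨a, b, ha, hb, hab, ?_⟩
      rw [← map_smul, ← map_smul, ← map_add, h, hTi])
    rw [← this, hTi']
  have hinv : ∀ g, ∀ x ∈ closure (K.extremePoints ℝ), T g x ∈ closure (K.extremePoints ℝ) := by
    intro g x hx
    exact map_mem_closure (T g).continuous hx (hinv0 g)
  refine ⟨(hK.cpt.extremePoints_nonempty hK.ne).closure,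
    hK.cpt.of_isClosed_subset isClosed_closure hsub, hinv, ?_⟩
  intro _ ν hν x h hh hx0 ε hε
  -- find an extreme point near `x`
  obtain ⟨x', hx', hlt⟩ : ∃ x' : closure (K.extremePoints ℝ), (x' : E) ∈ K.extremePoints ℝ ∧
      h x' < ε / 2 := by
    have hop : IsOpen {y | h y < ε / 2} := isOpen_lt h.continuous continuous_const
    obtain ⟨U, hU, hUe⟩ := isOpen_induced_iff.1 hop
    have hxU : (x : E) ∈ U := by
      have : x ∈ {y | h y < ε / 2} := by
        show h x < ε / 2
        rw [hx0]; linarith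
      rw [← hUe] at this; exact this
    obtain ⟨y, hyU, hy⟩ := mem_closure_iff.1 x.2 U hU hxU
    refine ⟨⟨y, subset_closure hy⟩, hy, ?_⟩
    have : (⟨y, subset_closure hy⟩ : closure (K.extremePoints ℝ)) ∈ {y | h y < ε / 2} := by
      rw [← hUe]; exact hyU
    exact this
  obtain ⟨g, hg⟩ := glasner_aux hT1 hTm hK hsub hinv ν hν x' hx' (h - h x' • 1) (by simp)
    (ε / 2) (by linarith)
  refine ⟨g, ?_⟩
  have e : (h - h x' • 1).comp (actX hinv g) = h.comp (actX hinv g) - h x' • 1 := by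
    ext y; simp
  rw [e, map_sub, PX_const hν] at hg
  linarith

end Glasner3


section States

variable {A : Type*} [CStarAlgebra A]

/-- States on a unital C*-algebra. -/
def IsSt (φ : WeakDual ℂ A) : Prop :=
  φ 1 = 1 ∧ ∀ a : A, 0 ≤ φ (star a * a)

theorem IsSt.map_star {φ : WeakDual ℂ A} (h : IsSt φ) (x : A) :
    φ (star x) = (starRingEnd ℂ) (φ x) := by
  have h1 := h.2 (1 + x)
  have h2 := h.2 (1 + Complex.I • x)
  have h3 := h.2 x
  have e1 : star (1 + x) * (1 + x) = 1 + x + star x + star x * x := by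
    rw [star_add, star_one]; noncomm_ring
  have e2 : star (1 + Complex.I • x) * (1 + Complex.I • x) =
      1 + Complex.I • x - Complex.I • star x + star x * x := by
    rw [star_add, star_one, star_smul, Complex.star_def, Complex.conj_I, add_mul, mul_add, mul_add,
      smul_mul_smul_comm, neg_mul, Complex.I_mul_I, neg_neg, one_smul, one_mul, mul_one, one_mul,
      neg_smul]
    abel
  rw [e1, map_add, map_add, map_add, h.1] at h1
  rw [e2, map_add, map_sub, map_add, h.1, map_smul, map_smul] at h2
  rw [Complex.le_def] at h1 h2 h3
  have a1 := h1.2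
  have a2 := h2.2
  have a3 := h3.2
  simp at a1 a2 a3
  apply Complex.ext
  · simp; linarith
  · simp; linarith

theorem IsSt.re_nonneg {φ : WeakDual ℂ A} (h : IsSt φ) (x : A) : 0 ≤ (φ (star x * x)).re :=
  (Complex.le_def.1 (h.2 x)).1

theorem IsSt.eq_re {φ : WeakDual ℂ A} (h : IsSt φ) (x : A) :
    φ (star x * x) = ((φ (star x * x)).re : ℂ) := by
  apply Complex.ext
  · simp
  · simpa using (Complex.le_def.1 (h.2 x)).2.symm

/-- inner product core attached to a state -/
@[reducible] def IsSt.core {φ : WeakDual ℂ A} (h : IsSt φ) : PreInnerProductSpace.Core ℂ A where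
  inner a b := φ (star a * b)
  conj_inner_symm a b := by rw [← h.map_star]; simp
  re_inner_nonneg a := h.re_nonneg a
  add_left a b c := by rw [star_add, add_mul, map_add]
  smul_left a b r := by rw [star_smul, smul_mul_assoc, map_smul]; rfl

theorem IsSt.cs {φ : WeakDual ℂ A} (h : IsSt φ) (a b : A) :
    ‖φ (star a * b)‖ ^ 2 ≤ (φ (star a * a)).re * (φ (star b * b)).re := by
  have := @InnerProductSpace.Core.inner_mul_inner_self_le ℂ A _ _ _ h.core a b
  have e : ‖φ (star b * a)‖ = ‖φ (star a * b)‖ := by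
    rw [← RCLike.norm_conj (φ (star a * b)), ← h.map_star]; simp
  calc _ = ‖φ (star a * b)‖ * ‖φ (star b * a)‖ := by rw [e, sq]
    _ ≤ _ := this

theorem IsSt.nonneg [PartialOrder A] [StarOrderedRing A] {φ : WeakDual ℂ A} (h : IsSt φ) {a : A}
    (ha : 0 ≤ a) : 0 ≤ φ a := by
  obtain ⟨b, rfl⟩ := CStarAlgebra.nonneg_iff_eq_star_mul_self.1 ha
  exact h.2 b

theorem IsSt.star_mul_le {φ : WeakDual ℂ A} (h : IsSt φ) (a : A) :
    (φ (star a * a)).re ≤ ‖a‖ ^ 2 := by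
  let := CStarAlgebra.spectralOrder A
  have := CStarAlgebra.spectralOrderedRing A
  have h1 : star a * a ≤ algebraMap ℝ A (‖a‖ ^ 2) := CStarAlgebra.star_mul_le_algebraMap_norm_sq
  have h2 := h.nonneg (sub_nonneg.2 h1)
  have e : algebraMap ℝ A (‖a‖ ^ 2) = ((‖a‖ ^ 2 : ℝ) : ℂ) • (1 : A) := by
    rw [Algebra.algebraMap_eq_smul_one]; rw [Complex.coe_smul]
  rw [map_sub, e, map_smul, h.1] at h2
  have := (Complex.le_def.1 h2).1
  simp only [smul_eq_mul, mul_one, Complex.sub_re, Complex.zero_re, Complex.ofReal_re] at this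
  linarith

theorem IsSt.norm_le {φ : WeakDual ℂ A} (h : IsSt φ) (a : A) : ‖φ a‖ ≤ ‖a‖ := by
  have h1 := h.cs 1 a
  rw [star_one, one_mul, one_mul, h.1, Complex.one_re, one_mul] at h1
  exact abs_le_of_sq_le_sq' (h1.trans (h.star_mul_le a)) (norm_nonneg _) |>.2

theorem IsSt.of_norm_le {φ : WeakDual ℂ A} (h1 : φ 1 = 1) (hn : ∀ a, ‖φ a‖ ≤ ‖a‖) : IsSt φ := by
  let := CStarAlgebra.spectralOrder A
  have := CStarAlgebra.spectralOrderedRing A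
  have : Nontrivial A := ⟨1, 0, fun h => by rw [h, map_zero] at h1; exact zero_ne_one h1⟩
  refine ⟨h1, fun a => ?_⟩
  set x := star a * a with hx
  have hsa : IsSelfAdjoint x := IsSelfAdjoint.star_mul_self a
  have hx0 : 0 ≤ x := star_mul_self_nonneg a
  rw [Complex.le_def]
  constructor
  · have hb : ‖algebraMap ℝ A ‖x‖ - x‖ ≤ ‖x‖ := by
      have := CStarAlgebra.norm_le_norm_of_nonneg_of_le (a := algebraMap ℝ A ‖x‖ - x)
        (b := algebraMap ℝ A ‖x‖) (sub_nonneg.2 hsa.le_algebraMap_norm_self)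
        (sub_le_self _ hx0)
      refine this.trans ?_
      rw [norm_algebraMap']; simp
    have h2 := (hn _).trans hb
    have e : algebraMap ℝ A ‖x‖ = (‖x‖ : ℂ) • (1 : A) := by
      rw [Algebra.algebraMap_eq_smul_one]; rw [Complex.coe_smul]
    rw [map_sub, e, map_smul, h1] at h2
    have h3 := (Complex.re_le_norm _).trans h2
    simp at h3
    simpa using h3
  · have key : ∀ t : ℝ, ((φ x).im + t) ^ 2 ≤ ‖x‖ ^ 2 + t ^ 2 := by
      intro t
      set y := x + ((t : ℂ) * Complex.I) • (1 : A) with hy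
      have e1 : star y * y = x * x + ((t : ℂ) ^ 2) • (1 : A) := by
        rw [hy, star_add, star_smul, star_one, hsa.star_eq]
        simp only [add_mul, mul_add, smul_mul_assoc, mul_smul_comm, one_mul, mul_one]
        have : star ((t : ℂ) * Complex.I) = - ((t : ℂ) * Complex.I) := by simp
        rw [this, neg_smul]
        have e : ((t : ℂ) * Complex.I) * -((t : ℂ) * Complex.I) = (t : ℂ) ^ 2 := by
          ring_nf; simp
        rw [smul_add, smul_smul, e]; abel
      have h2 : ‖y‖ ^ 2 ≤ ‖x‖ ^ 2 + t ^ 2 := by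
        rw [sq, ← CStarRing.norm_star_mul_self, e1]
        refine (norm_add_le _ _).trans ?_
        rw [norm_smul]
        have := norm_mul_le x x
        simp only [norm_pow, Complex.norm_real, Real.norm_eq_abs, sq_abs, norm_one, mul_one]
        nlinarith
      have h3 : (φ y).im = (φ x).im + t := by
        rw [hy, map_add, map_smul, h1]; simp
      have h4 := (Complex.abs_im_le_norm (φ y)).trans (hn y)
      rw [h3] at h4
      calc ((φ x).im + t) ^ 2 = |(φ x).im + t| ^ 2 := (sq_abs _).symm
        _ ≤ ‖y‖ ^ 2 := by gcongr
        _ ≤ _ := h2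
    by_contra hne
    simp only [Complex.zero_im] at hne
    have hne' : (φ x).im ≠ 0 := fun h => hne h.symm
    have := key ((‖x‖ ^ 2 + 1) / (2 * (φ x).im))
    have e : ((φ x).im + (‖x‖ ^ 2 + 1) / (2 * (φ x).im)) ^ 2 =
      (φ x).im ^ 2 + (‖x‖ ^ 2 + 1) + ((‖x‖ ^ 2 + 1) / (2 * (φ x).im)) ^ 2 := by
      field_simp; ring
    rw [e] at this
    nlinarith [sq_nonneg (φ x).im]

theorem isSt_compact : IsCompact {φ : WeakDual ℂ A | IsSt φ} := by
  refine (WeakDual.isCompact_closedBall (𝕜 := ℂ) (0 : StrongDual ℂ A) 1).of_isClosed_subset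
    ?_ ?_
  · have : {φ : WeakDual ℂ A | IsSt φ} = {φ | φ 1 = 1} ∩ ⋂ a : A, {φ | 0 ≤ φ (star a * a)} := by
      ext ν; simp [IsSt]
    rw [this]
    refine IsClosed.inter (isClosed_eq (WeakDual.eval_continuous _) continuous_const) ?_
    exact isClosed_iInter fun f =>
      isClosed_le continuous_const (WeakDual.eval_continuous _)
  · intro ν hν
    simp only [Set.mem_preimage, Metric.mem_closedBall, dist_zero_right]
    refine ContinuousLinearMap.opNorm_le_bound _ zero_le_one fun f => ?_
    simpa using! IsSt.norm_le hν f

theorem isSt_convex : Convex ℝ {φ : WeakDual ℂ A | IsSt φ} := by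
  intro μ hμ ν hν a b ha hb hab
  constructor
  · show (a : ℂ) * μ 1 + (b : ℂ) * ν 1 = 1
    rw [hμ.1, hν.1, mul_one, mul_one]; exact_mod_cast hab
  · intro f
    show 0 ≤ (a : ℂ) * μ _ + (b : ℂ) * ν _
    have := hμ.2 f
    have := hν.2 f
    have : (0 : ℂ) ≤ a := by exact_mod_cast ha
    have : (0 : ℂ) ≤ b := by exact_mod_cast hb
    positivity

instance : LocallyConvexSpace ℝ (WeakDual ℂ A) :=
  inferInstanceAs (LocallyConvexSpace ℝ (WeakBilin (topDualPairing ℂ A)))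

end States


section Conj

variable {A : Type*} [CStarAlgebra A]

/-- The conjugation action on the dual. -/
def conjAct (u : G → A) (g : G) : WeakDual ℂ A →L[ℝ] WeakDual ℂ A where
  toFun φ := StrongDual.toWeakDual ((WeakDual.toStrongDual φ).comp
    ((ContinuousLinearMap.mul ℂ A (u g⁻¹)).comp ((ContinuousLinearMap.mul ℂ A).flip (u g))))
  map_add' _ _ := rfl
  map_smul' _ _ := rfl
  cont := WeakDual.continuous_of_continuous_eval fun a => WeakDual.eval_continuous (u g⁻¹ * (a * u g))

theorem conjAct_apply (u : G → A) (g : G) (φ : WeakDual ℂ A) (a : A) :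
    conjAct u g φ a = φ (u g⁻¹ * (a * u g)) := rfl

/-- unitary representation in a C*-algebra -/
structure URep (u : G → A) : Prop where
  one : u 1 = 1
  mul : ∀ g h, u (g * h) = u g * u h
  star : ∀ g, star (u g) = u g⁻¹

theorem URep.inv_mul {u : G → A} (hu : URep u) (g : G) : u g⁻¹ * u g = 1 := by
  rw [← hu.mul, inv_mul_cancel, hu.one]

theorem URep.mul_inv {u : G → A} (hu : URep u) (g : G) : u g * u g⁻¹ = 1 := by
  rw [← hu.mul, mul_inv_cancel, hu.one]

theorem conjAct_one {u : G → A} (hu : URep u) (φ : WeakDual ℂ A) : conjAct u 1 φ = φ := by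
  apply DFunLike.ext; intro a
  rw [conjAct_apply, inv_one, hu.one, one_mul, mul_one]

theorem conjAct_mul {u : G → A} (hu : URep u) (g h : G) (φ : WeakDual ℂ A) :
    conjAct u (g * h) φ = conjAct u g (conjAct u h φ) := by
  apply DFunLike.ext; intro a
  rw [conjAct_apply, conjAct_apply, conjAct_apply, mul_inv_rev, hu.mul, hu.mul]
  simp only [mul_assoc]

theorem conjAct_isSt {u : G → A} (hu : URep u) (g : G) {φ : WeakDual ℂ A} (h : IsSt φ) :
    IsSt (conjAct u g φ) := by
  constructor
  · rw [conjAct_apply, one_mul, hu.inv_mul, h.1]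
  · intro a
    rw [conjAct_apply]
    have := h.2 (a * u g)
    rw [star_mul, hu.star, mul_assoc] at this
    rw [mul_assoc]
    exact this

end Conj

section Reg
set_option linter.unusedSectionVars false

theorem lreg_apply (g : G) (f : ℓ²(G, ℂ)) (h : G) : lreg g f h = f (g⁻¹ * h) := by
  unfold lreg lregE; rfl

/-- point mass -/
def dlt (k : G) : ℓ²(G, ℂ) := letI := Classical.decEq G; lp.single 2 k 1

open Classical in
theorem dlt_apply (k h : G) : dlt k h = if h = k then 1 else 0 := by
  unfold dlt
  simp [Pi.single_apply]

theorem deltaOne_eq : deltaOne (G := G) = dlt 1 := by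
  unfold deltaOne dlt; rfl

theorem lreg_dlt (g k : G) : lreg g (dlt k) = dlt (g * k) := by
  ext h
  rw [lreg_apply, dlt_apply, dlt_apply]
  by_cases hh : h = g * k
  · rw [if_pos hh, if_pos (inv_mul_eq_iff_eq_mul.2 hh)]
  · rw [if_neg hh, if_neg (fun h1 => hh (inv_mul_eq_iff_eq_mul.1 h1))]

theorem inner_dlt (k : G) (f : ℓ²(G, ℂ)) : inner ℂ (dlt k) f = f k := by
  classical
  unfold dlt
  rw [lp.inner_single_left]; simp

theorem norm_dlt (k : G) : ‖dlt k‖ = 1 := by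
  classical
  unfold dlt
  rw [lp.norm_single (by norm_num)]; simp

theorem ext_dlt {S T : ℓ²(G, ℂ) →L[ℂ] ℓ²(G, ℂ)} (h : ∀ k, S (dlt k) = T (dlt k)) : S = T := by
  classical
  ext1 f
  have hf := lp.hasSum_single (p := 2) (by norm_num) f
  have e : ∀ k : G, lp.single 2 k (f k) = f k • dlt k := by
    intro k
    unfold dlt
    rw [← lp.single_smul]
    simp
  refine HasSum.unique (f := fun k => S (lp.single 2 k (f k))) (hf.mapL S) ?_
  convert hf.mapL T using 2 with k
  rw [e, map_smul, map_smul, h]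

theorem lreg_rep : URep (lreg (G := G)) where
  one := by ext f h; rw [lreg_apply]; simp
  mul g k := by
    ext f h
    rw [lreg_apply, mul_apply_eq_comp, lreg_apply, lreg_apply, mul_inv_rev, mul_assoc]
  star g := by
    rw [ContinuousLinearMap.star_eq_adjoint, eq_comm, ContinuousLinearMap.eq_adjoint_iff]
    intro x y
    rw [lp.inner_eq_tsum, lp.inner_eq_tsum, 
      ← (Equiv.mulLeft g).tsum_eq (fun h => inner ℂ (x h) (lreg g y h))]
    refine tsum_congr fun h => ?_
    simp only [lreg_apply, Equiv.coe_mulLeft]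
    rw [← mul_assoc]
    simp

theorem redCstar_closed : IsClosed (redCstar G : Set (ℓ²(G, ℂ) →L[ℂ] ℓ²(G, ℂ))) := by
  unfold redCstar
  exact StarSubalgebra.isClosed_topologicalClosure _

attribute [local instance] redCstar_closed

theorem coe_uu (g : G) : (uu g : ℓ²(G, ℂ) →L[ℂ] ℓ²(G, ℂ)) = lreg g := by
  unfold uu; rfl

theorem uu_rep : URep (uu (G := G)) where
  one := Subtype.ext (by rw [coe_uu]; exact lreg_rep.one)
  mul g k := Subtype.ext (by
    rw [coe_uu]
    show lreg (g * k) = (uu g : ℓ²(G, ℂ) →L[ℂ] ℓ²(G, ℂ)) * (uu k : ℓ²(G, ℂ) →L[ℂ] ℓ²(G, ℂ))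
    rw [coe_uu, coe_uu]; exact lreg_rep.mul g k)
  star g := Subtype.ext (by
    rw [coe_uu]
    show star (uu g : ℓ²(G, ℂ) →L[ℂ] ℓ²(G, ℂ)) = _
    rw [coe_uu]; exact lreg_rep.star g)

theorem adjoin_le_span : (StarAlgebra.adjoin ℂ (Set.range (lreg (G := G))) :
    Set (ℓ²(G, ℂ) →L[ℂ] ℓ²(G, ℂ))) ⊆ Submodule.span ℂ (Set.range (lreg (G := G))) := by
  intro x hx
  refine StarAlgebra.adjoin_induction (R := ℂ) (s := Set.range (lreg (G := G)))
    (p := fun x _ => x ∈ Submodule.span ℂ (Set.range (lreg (G := G)))) ?_ ?_ ?_ ?_ ?_ hx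
  · intro x hx; exact Submodule.subset_span hx
  · intro r
    rw [Algebra.algebraMap_eq_smul_one]
    exact Submodule.smul_mem _ _ (Submodule.subset_span ⟨1, lreg_rep.one⟩)
  · intro x y _ _ hx hy; exact Submodule.add_mem _ hx hy
  · intro x y _ _ hx hy
    have := Submodule.mul_mem_mul hx hy
    rw [Submodule.span_mul_span] at this
    refine Submodule.span_mono ?_ this
    rintro _ ⟨_, ⟨g, rfl⟩, _, ⟨k, rfl⟩, rfl⟩
    exact ⟨g * k, lreg_rep.mul g k⟩
  · intro x hx0 hx
    clear hx0
    induction hx using Submodule.span_induction with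
    | mem x h => obtain ⟨g, rfl⟩ := h; rw [lreg_rep.star]; exact Submodule.subset_span ⟨_, rfl⟩
    | zero => simp
    | add x y _ _ h1 h2 => rw [star_add]; exact Submodule.add_mem _ h1 h2
    | smul a x _ h => rw [star_smul]; exact Submodule.smul_mem _ _ h

/-- Density of the group algebra. -/
theorem dense_uu (V : Submodule ℂ (redCstar G)) (hV : IsClosed (V : Set (redCstar G)))
    (h : ∀ g, uu g ∈ V) (a : redCstar G) : a ∈ V := by
  have ha : (a : ℓ²(G, ℂ) →L[ℂ] ℓ²(G, ℂ)) ∈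
      closure (Submodule.span ℂ (Set.range (lreg (G := G))) : Set (ℓ²(G, ℂ) →L[ℂ] ℓ²(G, ℂ))) := by
    have h1 := a.2
    have h2 : (redCstar G : Set (ℓ²(G, ℂ) →L[ℂ] ℓ²(G, ℂ))) =
      closure (StarAlgebra.adjoin ℂ (Set.range (lreg (G := G)))) := by
      unfold redCstar; exact StarSubalgebra.topologicalClosure_coe _
    have h3 : (a : ℓ²(G, ℂ) →L[ℂ] ℓ²(G, ℂ)) ∈
        (redCstar G : Set (ℓ²(G, ℂ) →L[ℂ] ℓ²(G, ℂ))) := h1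
    rw [h2] at h3
    exact closure_mono adjoin_le_span h3
  have hspan : Submodule.span ℂ (Set.range (lreg (G := G))) ≤
      V.map (redCstar G).subtype.toLinearMap := by
    rw [Submodule.span_le]
    rintro _ ⟨g, rfl⟩
    exact ⟨uu g, h g, coe_uu g⟩
  have hcl : IsClosed ((V.map (redCstar G).subtype.toLinearMap : Submodule ℂ _) :
      Set (ℓ²(G, ℂ) →L[ℂ] ℓ²(G, ℂ))) :=
    (redCstar_closed (G := G)).isClosedEmbedding_subtypeVal.isClosedMap _ hV
  obtain ⟨b, hb, hba⟩ := closure_minimal hspan hcl ha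
  have : b = a := Subtype.ext hba
  rwa [← this]

theorem ext_uu {φ ψ : WeakDual ℂ (redCstar G)} (h : ∀ g, φ (uu g) = ψ (uu g)) : φ = ψ := by
  apply DFunLike.ext
  intro a
  have := dense_uu (LinearMap.ker ((WeakDual.toStrongDual φ - WeakDual.toStrongDual ψ :
    StrongDual ℂ (redCstar G)) : redCstar G →ₗ[ℂ] ℂ))
    (ContinuousLinearMap.isClosed_ker
      (WeakDual.toStrongDual φ - WeakDual.toStrongDual ψ : StrongDual ℂ (redCstar G)))
    (fun g => by
      rw [LinearMap.mem_ker]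
      exact sub_eq_zero.2 (h g)) a
  rw [LinearMap.mem_ker] at this
  exact sub_eq_zero.1 this

theorem tau_apply (a : redCstar G) :
    tau G a = inner ℂ (dlt 1) ((a : ℓ²(G, ℂ) →L[ℂ] ℓ²(G, ℂ)) (dlt 1)) := by
  rw [← deltaOne_eq]
  unfold tau; rfl

theorem tau_uu_one : tau G (uu 1) = 1 := by
  rw [tau_apply, coe_uu, lreg_dlt, inner_dlt, dlt_apply]; simp

theorem tau_uu_ne {g : G} (hg : g ≠ 1) : tau G (uu g) = 0 := by
  rw [tau_apply, coe_uu, lreg_dlt, inner_dlt, dlt_apply]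
  simp [hg.symm]

theorem tau_star_mul (a : redCstar G) :
    tau G (star a * a) = ((‖(a : ℓ²(G, ℂ) →L[ℂ] ℓ²(G, ℂ)) (dlt 1)‖ ^ 2 : ℝ) : ℂ) := by
  rw [tau_apply]
  show inner ℂ (dlt 1) ((star (a : ℓ²(G, ℂ) →L[ℂ] ℓ²(G, ℂ))) (a.1 (dlt 1))) = _
  rw [ContinuousLinearMap.star_eq_adjoint, ContinuousLinearMap.adjoint_inner_right,
    inner_self_eq_norm_sq_to_K]
  simp

theorem tau_isSt : IsSt (tau G) := by
  refine ⟨?_, fun a => ?_⟩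
  · rw [← uu_rep.one]; exact tau_uu_one
  · rw [tau_star_mul]
    exact Complex.zero_le_real.2 (sq_nonneg _)

theorem tau_inv (g : G) : conjAct uu g (tau G) = tau G := by
  apply ext_uu
  intro k
  rw [conjAct_apply, ← uu_rep.mul, ← uu_rep.mul]
  by_cases hk : k = 1
  · subst hk; simp
  · rw [tau_uu_ne hk, tau_uu_ne]
    intro h
    apply hk
    rw [inv_mul_eq_one] at h
    exact (mul_eq_right.1 h.symm)

theorem tau_faithful {a : redCstar G} (h : tau G (star a * a) = 0) : a = 0 := by
  apply Subtype.ext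
  apply ext_dlt
  intro k
  have h1 : tau G (star (a * uu k) * (a * uu k)) = 0 := by
    rw [← h]
    nth_rw 2 [← tau_inv k]
    rw [conjAct_apply, star_mul, uu_rep.star]
    simp only [mul_assoc]
  rw [tau_star_mul] at h1
  have h2 : ‖((a * uu k : redCstar G) : ℓ²(G, ℂ) →L[ℂ] ℓ²(G, ℂ)) (dlt 1)‖ = 0 := by
    exact_mod_cast (pow_eq_zero_iff (two_ne_zero)).1 (by exact_mod_cast h1)
  rw [norm_eq_zero] at h2
  have h3 : ((a * uu k : redCstar G) : ℓ²(G, ℂ) →L[ℂ] ℓ²(G, ℂ)) (dlt 1) =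
      (a : ℓ²(G, ℂ) →L[ℂ] ℓ²(G, ℂ)) ((uu k : ℓ²(G, ℂ) →L[ℂ] ℓ²(G, ℂ)) (dlt 1)) := rfl
  rw [h3, coe_uu, lreg_dlt, mul_one] at h2
  rw [h2]; simp

end Reg

section Main
attribute [local instance] redCstar_closed


section Meas

/-- Integration functional. -/
def intF {X : Type*} [TopologicalSpace X] [CompactSpace X] [MeasurableSpace X] [BorelSpace X]
    (μ : Measure X) [IsProbabilityMeasure μ] : WeakDual ℝ C(X, ℝ) :=
  StrongDual.toWeakDual (LinearMap.mkContinuous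
    { toFun := fun f => ∫ x, f x ∂μ
      map_add' := fun f g => integral_add
        ((BoundedContinuousFunction.mkOfCompact f).integrable μ)
        ((BoundedContinuousFunction.mkOfCompact g).integrable μ)
      map_smul' := fun c f => integral_const_mul c f } 1 (by
      intro f
      have := norm_integral_le_of_norm_le_const (μ := μ) (f := fun x => f x) (C := ‖f‖)
        (Filter.Eventually.of_forall fun x => f.norm_coe_le_norm x)
      simpa [mul_comm] using this))

theorem intF_apply {X : Type*} [TopologicalSpace X] [CompactSpace X] [MeasurableSpace X]
    [BorelSpace X] (μ : Measure X) [IsProbabilityMeasure μ] (f : C(X, ℝ)) :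
    intF μ f = ∫ x, f x ∂μ := rfl

theorem intF_mem {X : Type*} [TopologicalSpace X] [CompactSpace X] [MeasurableSpace X]
    [BorelSpace X] (μ : Measure X) [IsProbabilityMeasure μ] : intF μ ∈ PX X := by
  refine ⟨?_, fun f hf => ?_⟩
  · rw [intF_apply]; simp
  · rw [intF_apply]; exact integral_nonneg hf

theorem dirac_mem_closure {X : Type*} [TopologicalSpace X] [CompactSpace X] [MeasurableSpace X]
    [BorelSpace X] {ι : Type*} (μ D : ProbabilityMeasure X) (σ : ι → C(X, X)) (x : X)
    (hD : ∀ f : BoundedContinuousFunction X ℝ, ∫ y, f y ∂(D : Measure X) = f x)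
    (h : ∀ h : C(X, ℝ), 0 ≤ h → h x = 0 → ∀ ε > 0, ∃ i, intF (μ : Measure X) (h.comp (σ i)) < ε) :
    D ∈ closure {ν : ProbabilityMeasure X | ∃ i : ι,
        ν = μ.map (f := σ i) (σ i).continuous.measurable.aemeasurable} := by
  let J : Type _ := {h : C(X, ℝ) // 0 ≤ h ∧ h x = 0}
  have hJ0 : Nonempty J := ⟨⟨0, le_rfl, rfl⟩⟩
  have hJd : IsDirectedOrder J := by
    refine ⟨fun a b => ⟨⟨a.1 + b.1, add_nonneg a.2.1 b.2.1, ?_⟩, ?_, ?_⟩⟩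
    · show a.1 x + b.1 x = 0
      rw [a.2.2, b.2.2, add_zero]
    · show a.1 ≤ a.1 + b.1
      exact le_add_of_nonneg_right b.2.1
    · show b.1 ≤ a.1 + b.1
      exact le_add_of_nonneg_left a.2.1
  choose i hi using fun j : J => h j.1 j.2.1 j.2.2 1 one_pos
  suffices hten : Filter.Tendsto (fun j : J => (μ.map (f := σ (i j))
      (σ (i j)).continuous.measurable.aemeasurable : ProbabilityMeasure X)) Filter.atTop
      (nhds D) from
    mem_closure_of_tendsto hten (Filter.Eventually.of_forall fun j => ⟨i j, rfl⟩)
  rw [ProbabilityMeasure.tendsto_iff_forall_integral_tendsto]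
  intro f
  rw [Metric.tendsto_nhds]
  intro ε hε
  let f0 : C(X, ℝ) := ⟨fun y => ε⁻¹ * |f y - f x|, by fun_prop⟩
  let j0 : J := ⟨f0, fun y => by show 0 ≤ ε⁻¹ * |f y - f x|; positivity, by simp [f0]⟩
  filter_upwards [Filter.eventually_ge_atTop j0] with j hj
  have hj' : ∀ y, ε⁻¹ * |f y - f x| ≤ j.1 y := fun y => hj y
  have h1 := hi j
  rw [intF_apply] at h1
  have e2 : ∫ y, f y ∂((μ.map (f := σ (i j)) (σ (i j)).continuous.measurable.aemeasurable :
      ProbabilityMeasure X) : Measure X) = ∫ y, f (σ (i j) y) ∂(μ : Measure X) :=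
    integral_map (σ (i j)).continuous.measurable.aemeasurable
      f.continuous.stronglyMeasurable.aestronglyMeasurable
  rw [hD, e2, Real.dist_eq]
  have i1 : Integrable (fun y => f (σ (i j) y)) (μ : Measure X) :=
    (f.compContinuous (σ (i j))).integrable _
  have i2 : Integrable (fun y => j.1 (σ (i j) y)) (μ : Measure X) :=
    (BoundedContinuousFunction.mkOfCompact (j.1.comp (σ (i j)))).integrable _
  have e3 : ∫ y, f (σ (i j) y) ∂(μ : Measure X) - f x =
      ∫ y, (f (σ (i j) y) - f x) ∂(μ : Measure X) := by
    rw [integral_sub i1 (integrable_const _)]; simp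
  rw [e3]
  calc |∫ y, (f (σ (i j) y) - f x) ∂(μ : Measure X)|
      ≤ ∫ y, |f (σ (i j) y) - f x| ∂(μ : Measure X) := abs_integral_le_integral_abs
    _ ≤ ∫ y, ε * j.1 (σ (i j) y) ∂(μ : Measure X) := by
        refine integral_mono (i1.sub (integrable_const _)).abs (i2.const_mul _) fun y => ?_
        have := mul_le_mul_of_nonneg_left (hj' (σ (i j) y)) hε.le
        rwa [← mul_assoc, mul_inv_cancel₀ hε.ne', one_mul] at this
    _ = ε * ∫ y, j.1 (σ (i j) y) ∂(μ : Measure X) := integral_const_mul _ _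
    _ < ε * 1 := mul_lt_mul_of_pos_left h1 hε
    _ = ε := mul_one ε

theorem dualAct_eq (g : G) (φ : WeakDual ℂ (redCstar G)) : dualAct g φ = conjAct uu g φ := by
  apply DFunLike.ext; intro a
  show φ (uu g⁻¹ * a * uu g) = φ (uu g⁻¹ * (a * uu g))
  rw [mul_assoc]

theorem isDualBoundary_of {X : Set (WeakDual ℂ (redCstar G))}
    (h : BdryFn (conjAct (uu (G := G))) X) : IsDualBoundary G X := by
  refine ⟨h.ne, h.cpt, fun g φ hφ => by rw [dualAct_eq]; exact h.inv g φ hφ, ?_⟩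
  intro μ x
  have hc : CompactSpace X := isCompact_iff_compactSpace.1 h.cpt
  let ms : MeasurableSpace X := borel X
  have bs : BorelSpace X := ⟨rfl⟩
  have key := dirac_mem_closure μ ⟨Measure.dirac x, Measure.dirac.isProbabilityMeasure⟩
    (actX h.inv) x (fun f => integral_dirac' _ _ f.continuous.stronglyMeasurable)
    (fun k hk hkx ε hε => h.sp _ (intF_mem _) x k hk hkx ε hε)
  simp only [dualAct_eq]
  exact key

end Meas

section Ideal

theorem exists_state_ideal {A : Type*} [CStarAlgebra A] (V : Submodule ℂ A)
    (hV : IsClosed (V : Set A)) (hu : ∀ a ∈ V, ¬ IsUnit a) :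
    ∃ φ : WeakDual ℂ A, IsSt φ ∧ ∀ a ∈ V, φ a = 0 := by
  have h0 : (1 : A) ∉ V := fun h => hu 1 h isUnit_one
  have hnt : Nontrivial A := ⟨⟨1, 0, fun h => h0 (h ▸ V.zero_mem)⟩⟩
  have hf : IsClosed (V : Set A) := hV
  have hn1 : ‖(Submodule.Quotient.mk 1 : A ⧸ V)‖ = 1 := by
    apply le_antisymm
    · refine (Submodule.Quotient.norm_mk_le V 1).trans ?_
      rw [CStarRing.norm_one]
    · by_contra hlt
      push Not at hlt
      obtain ⟨m, hm1, hm2⟩ := Submodule.Quotient.norm_mk_lt (S := V)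
        (Submodule.Quotient.mk 1 : A ⧸ V) (sub_pos.2 hlt)
      rw [add_sub_cancel] at hm2
      refine hu (1 - m) ?_ (isUnit_one_sub_of_norm_lt_one hm2)
      exact (Submodule.Quotient.eq V).1 hm1.symm
  obtain ⟨g, hg1, hg2⟩ := exists_dual_vector ℂ (Submodule.Quotient.mk 1 : A ⧸ V)
    (by rw [hn1]; exact one_ne_zero)
  let Q : A →L[ℂ] A ⧸ V := ⟨V.mkQ, by
    exact (LinearMap.mkContinuous V.mkQ 1 (fun x => by
      rw [one_mul]; exact Submodule.Quotient.norm_mk_le V x)).continuous⟩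
  refine ⟨StrongDual.toWeakDual (g.comp Q), IsSt.of_norm_le ?_ ?_, ?_⟩
  · show g (Submodule.Quotient.mk 1) = 1
    rw [hg2, hn1]; simp
  · intro a
    show ‖g (Submodule.Quotient.mk a)‖ ≤ ‖a‖
    refine (g.le_opNorm _).trans ?_
    rw [hg1, one_mul]
    exact Submodule.Quotient.norm_mk_le V a
  · intro a ha
    show g (Submodule.Quotient.mk a) = 0
    rw [(Submodule.Quotient.mk_eq_zero V).2 ha, map_zero]

theorem direction1 (H : ∀ B : Set (WeakDual ℂ (redCstar G)),
    B ⊆ {φ | IsState φ} → IsDualBoundary G B → B = {tau G}) : IsCstarSimple G := by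
  intro I hI
  by_cases hT : I = ⊤
  · exact Or.inr hT
  left
  let V : Submodule ℂ (redCstar G) :=
    { carrier := I
      add_mem' := fun ha hb => I.add_mem ha hb
      zero_mem' := I.zero_mem
      smul_mem' := fun c a ha => by
        have := I.mul_mem_left (c • 1) a ha
        rwa [smul_mul_assoc, one_mul] at this }
  have hVI : ∀ a, a ∈ V ↔ a ∈ I := fun a => Iff.rfl
  obtain ⟨φ, hφ, hφ0⟩ := exists_state_ideal V hI (by
    intro a ha hua
    apply hT
    obtain ⟨w, hw⟩ := hua
    have h1 : (1 : redCstar G) ∈ I := by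
      have := I.mul_mem_left (↑w⁻¹) a ha
      rwa [← hw, Units.inv_mul] at this
    rw [eq_top_iff]
    intro x _
    have := I.mul_mem_left x 1 h1
    rwa [mul_one] at this)
  let K : Set (WeakDual ℂ (redCstar G)) := {φ | IsSt φ} ∩ ⋂ a ∈ V, {φ | φ a = 0}
  have hKm : ∀ φ, φ ∈ K ↔ IsSt φ ∧ ∀ a ∈ V, φ a = 0 := by intro φ; simp [K]
  obtain ⟨K', hK', hmin⟩ := exists_minConv (conjAct (uu (G := G))) K ⟨φ, (hKm _).2 ⟨hφ, hφ0⟩⟩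
    (isSt_compact.inter_right (isClosed_biInter fun a _ =>
      isClosed_eq (WeakDual.eval_continuous a) continuous_const))
    (by
      intro φ hφ ψ hψ s t hs ht hst
      rw [hKm] at hφ hψ ⊢
      refine ⟨isSt_convex hφ.1 hψ.1 hs ht hst, fun a ha => ?_⟩
      show s • φ a + t • ψ a = 0
      rw [hφ.2 a ha, hψ.2 a ha]; simp)
    (by
      intro g φ hφ
      rw [hKm] at hφ ⊢
      refine ⟨conjAct_isSt uu_rep g hφ.1, fun a ha => ?_⟩
      rw [conjAct_apply]
      exact hφ.2 _ (I.mul_mem_left _ _ (I.mul_mem_right _ _ ha)))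
  have hX := glasner (conjAct_one uu_rep) (conjAct_mul uu_rep) hmin
  have hsub : closure (K'.extremePoints ℝ) ⊆ K' :=
    closure_minimal extremePoints_subset hmin.cpt.isClosed
  have hEq := H _ (fun φ hφ => ((hKm _).1 (hK' (hsub hφ))).1) (isDualBoundary_of hX)
  have hτ : tau G ∈ K := hK' (hsub (by rw [hEq]; rfl))
  rw [hKm] at hτ
  rw [eq_bot_iff]
  intro a ha
  rw [TwoSidedIdeal.mem_bot]
  exact tau_faithful (hτ.2 _ (I.mul_mem_left _ _ ha))

end Ideal


section Meas2
open scoped CompactlySupported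

theorem exists_riesz {X : Type*} [TopologicalSpace X] [CompactSpace X] [T2Space X]
    [MeasurableSpace X] [BorelSpace X] {ν : WeakDual ℝ C(X, ℝ)} (hν : ν ∈ PX X) :
    ∃ μ : ProbabilityMeasure X, ∀ f : C(X, ℝ), ∫ x, f x ∂(μ : Measure X) = ν f := by
  let Λ : C_c(X, ℝ) →ₚ[ℝ] ℝ :=
    { toFun := fun f => ν f.toContinuousMap
      map_add' := fun f g => map_add ν f.toContinuousMap g.toContinuousMap
      map_smul' := fun c f => map_smul ν c f.toContinuousMap
      monotone' := fun f g h => PX_mono hν h }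
  have key : ∀ f : C(X, ℝ), ∫ x, f x ∂(RealRMK.rieszMeasure Λ) = ν f := fun f =>
    RealRMK.integral_rieszMeasure Λ ⟨f, HasCompactSupport.of_compactSpace _⟩
  have h1 := key 1
  rw [hν.1] at h1
  simp only [ContinuousMap.one_apply, integral_const, smul_eq_mul, mul_one] at h1
  refine ⟨⟨RealRMK.rieszMeasure Λ, ⟨?_⟩⟩, key⟩
  rw [Measure.real, ENNReal.toReal_eq_one_iff] at h1
  exact h1

/-- Evaluation, real part. -/
def evRe {A : Type*} [CStarAlgebra A] (a : A) : WeakDual ℂ A →L[ℝ] ℝ where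
  toFun φ := (φ a).re
  map_add' _ _ := rfl
  map_smul' c φ := by
    show (c • φ a).re = c * (φ a).re
    simp
  cont := Complex.continuous_re.comp (WeakDual.eval_continuous a)

theorem bdry_bar_tau {X : Set (WeakDual ℂ (redCstar G))} (hX : IsDualBoundary G X)
    [CompactSpace X] {ν : WeakDual ℝ C(X, ℝ)} (hν : ν ∈ PX X) (hb : IsBar X ν (tau G)) :
    X = {tau G} := by
  obtain ⟨hne, -, hinv, hcl⟩ := hX
  let ms : MeasurableSpace X := borel X
  have bs : BorelSpace X := ⟨rfl⟩
  obtain ⟨μ, hμ⟩ := exists_riesz hν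
  have key : ∀ x ∈ X, ∀ a : redCstar G, (x a).re = (tau G a).re := by
    intro x hx a
    have h := hcl μ ⟨x, hx⟩
    let F : BoundedContinuousFunction X ℝ :=
      BoundedContinuousFunction.mkOfCompact (restr X (evRe a))
    have hC : IsClosed {ρ : ProbabilityMeasure X | ∫ y, F y ∂(ρ : Measure X) = (tau G a).re} :=
      isClosed_eq (ProbabilityMeasure.continuous_integral_boundedContinuousFunction F)
        continuous_const
    have h2 := closure_minimal (s := {ρ : ProbabilityMeasure X | ∃ g : G,
        ρ = μ.map (f := fun y => (⟨dualAct g y.1, hinv g y.1 y.2⟩ : X))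
          ((((dualAct_continuous g).comp continuous_subtype_val).subtype_mk
            (fun y => hinv g y.1 y.2)).measurable.aemeasurable)}) ?_ hC h
    · have h3 : ∫ y, F y ∂(Measure.dirac (⟨x, hx⟩ : X)) = (tau G a).re := h2
      rw [integral_dirac' _ _ F.continuous.stronglyMeasurable] at h3
      exact h3
    · rintro ρ ⟨g, rfl⟩
      rw [Set.mem_ofPred_eq]
      have e : ∫ y, F y ∂((μ.map (f := fun y => (⟨dualAct g y.1, hinv g y.1 y.2⟩ : X))
          ((((dualAct_continuous g).comp continuous_subtype_val).subtype_mk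
            (fun y => hinv g y.1 y.2)).measurable.aemeasurable) : ProbabilityMeasure X) :
              Measure X) = ∫ y, F (⟨dualAct g y.1, hinv g y.1 y.2⟩ : X) ∂(μ : Measure X) :=
        integral_map ((((dualAct_continuous g).comp continuous_subtype_val).subtype_mk
            (fun y => hinv g y.1 y.2)).measurable.aemeasurable)
          F.continuous.stronglyMeasurable.aestronglyMeasurable
      rw [e]
      have e2 := hμ (restr X ((evRe a).comp (conjAct uu g)))
      rw [hb] at e2
      have e3 : ((evRe a).comp (conjAct uu g)) (tau G) = (tau G a).re := by
        show (conjAct uu g (tau G) a).re = _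
        rw [tau_inv]
      rw [e3] at e2
      rw [← e2]
      refine integral_congr_ae (Filter.Eventually.of_forall fun y => ?_)
      show (dualAct g y.1 a).re = (conjAct uu g y.1 a).re
      rw [dualAct_eq]
  have key2 : ∀ x ∈ X, x = tau G := by
    intro x hx
    apply DFunLike.ext
    intro a
    apply Complex.ext
    · exact key x hx a
    · have := key x hx (Complex.I • a)
      rw [map_smul, map_smul] at this
      simpa using this
  refine Set.eq_singleton_iff_unique_mem.2 ⟨?_, key2⟩
  obtain ⟨x, hx⟩ := hne
  rw [← key2 x hx]; exact hx

end Meas2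


section BarsConvex
set_option linter.unusedSectionVars false
variable {E : Type*} [AddCommGroup E] [Module ℝ E] [TopologicalSpace E]

theorem bars_convex {K X : Set E} (hK : Convex ℝ K) [CompactSpace X] :
    Convex ℝ {b | b ∈ K ∧ ∃ ν ∈ PX X, IsBar X ν b} := by
  rintro b ⟨hb, μ, hμ, hbμ⟩ c ⟨hc, μ', hμ', hcμ⟩ s t hs ht hst
  refine ⟨hK hb hc hs ht hst, s • μ + t • μ', PX_convex X hμ hμ' hs ht hst, ?_⟩
  intro l
  show s * μ _ + t * μ' _ = _
  rw [hbμ l, hcμ l]; simp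

end BarsConvex

section Ext

variable (G) in
/-- Bounded operators on `ℓ²(G)`. -/
abbrev BG : Type u := ℓ²(G, ℂ) →L[ℂ] ℓ²(G, ℂ)

variable (G) in
/-- inclusion -/
def inclR : redCstar G →L[ℂ] BG G :=
  { toLinearMap := (redCstar G).subtype.toLinearMap, cont := continuous_subtype_val }

theorem inclR_apply (a : redCstar G) : inclR G a = (a : BG G) := rfl

variable (G) in
/-- restriction -/
def res : WeakDual ℂ (BG G) →L[ℝ] WeakDual ℂ (redCstar G) where
  toFun φ := StrongDual.toWeakDual ((WeakDual.toStrongDual φ).comp (inclR G))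
  map_add' _ _ := rfl
  map_smul' _ _ := rfl
  cont := WeakDual.continuous_of_continuous_eval fun a => WeakDual.eval_continuous (a : BG G)

theorem res_apply (φ : WeakDual ℂ (BG G)) (a : redCstar G) : res G φ a = φ (a : BG G) := rfl

theorem res_conj (g : G) (φ : WeakDual ℂ (BG G)) :
    res G (conjAct lreg g φ) = conjAct uu g (res G φ) := by
  apply DFunLike.ext; intro a
  rw [res_apply, conjAct_apply, conjAct_apply, res_apply, ← coe_uu, ← coe_uu]; rfl

theorem res_isSt {φ : WeakDual ℂ (BG G)} (h : IsSt φ) : IsSt (res G φ) :=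
  ⟨h.1, fun a => h.2 (a : BG G)⟩

theorem ext_aux {E : Type*} [NormedAddCommGroup E] [NormedSpace ℂ E] (p : Submodule ℂ E)
    (f : p →ₗ[ℂ] ℂ) (hf : ∀ x, ‖f x‖ ≤ ‖x‖) :
    ∃ g : StrongDual ℂ E, (∀ x : p, g x = f x) ∧ ∀ x, ‖g x‖ ≤ ‖x‖ := by
  have hf' : ∀ x, ‖f x‖ ≤ 1 * ‖x‖ := fun x => by rw [one_mul]; exact hf x
  obtain ⟨g, hg1, hg2⟩ := exists_extension_norm_eq p (f.mkContinuous 1 hf')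
  refine ⟨g, hg1, fun x => ?_⟩
  refine (g.le_opNorm x).trans ?_
  rw [hg2]
  exact mul_le_of_le_one_left (norm_nonneg _) (f.mkContinuous_norm_le zero_le_one hf')

theorem exists_ext {φ : WeakDual ℂ (redCstar G)} (h : IsSt φ) :
    ∃ ψ : WeakDual ℂ (BG G), IsSt ψ ∧ res G ψ = φ := by
  obtain ⟨g, hg1, hg2⟩ := ext_aux ((redCstar G).toSubalgebra.toSubmodule)
    { toFun := fun a => φ (⟨a.1, a.2⟩ : redCstar G)
      map_add' := fun a b => map_add φ (⟨a.1, a.2⟩ : redCstar G) ⟨b.1, b.2⟩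
      map_smul' := fun c a => map_smul φ c (⟨a.1, a.2⟩ : redCstar G) }
    (fun a => h.norm_le (⟨a.1, a.2⟩ : redCstar G))
  have hr : ∀ a : redCstar G, g (a : BG G) = φ a := fun a => hg1 ⟨a.1, a.2⟩
  exact ⟨StrongDual.toWeakDual g, IsSt.of_norm_le ((hr 1).trans h.1) hg2, DFunLike.ext _ _ hr⟩

theorem PX_delta {X : Type*} [TopologicalSpace X] [CompactSpace X] (x : X) :
    ∃ ν ∈ PX X, ∀ f : C(X, ℝ), ν f = f x :=
  ⟨StrongDual.toWeakDual (ContinuousMap.evalCLM ℝ x), ⟨rfl, fun _ hf => hf x⟩, fun _ => rfl⟩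

theorem res_comb (x y : WeakDual ℂ (BG G)) (s t : ℝ) :
    res G (s • x + t • y) = s • res G x + t • res G y := by
  apply DFunLike.ext; intro a; rfl

theorem res_convex {R : Set (WeakDual ℂ (redCstar G))} (hRv : Convex ℝ R) :
    Convex ℝ ((res G) ⁻¹' R) := by
  intro x hx y hy s t hs ht hst
  show res G _ ∈ R
  rw [res_comb]
  exact hRv hx hy hs ht hst

theorem exists_Z_aux {R : Set (WeakDual ℂ (redCstar G))} (hRS : ∀ b ∈ R, IsSt b)
    (hRn : R.Nonempty) (hRc : IsCompact R) (hRv : Convex ℝ R)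
    (hRi : ∀ g : G, ∀ b ∈ R, conjAct uu g b ∈ R) :
    ∃ Z : Set (WeakDual ℂ (BG G)), BdryFn (conjAct lreg) Z ∧ (∀ z ∈ Z, IsSt z) ∧
      ∀ z ∈ Z, res G z ∈ R := by
  let L : Set (WeakDual ℂ (BG G)) := {φ | IsSt φ} ∩ (res G) ⁻¹' R
  obtain ⟨b, hb⟩ := hRn
  obtain ⟨ψ, hψ, hψx⟩ := exists_ext (φ := b) (hRS b hb)
  obtain ⟨L', hL', hmin⟩ := exists_minConv (conjAct (lreg (G := G))) L
    ⟨ψ, hψ, by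
      show res G ψ ∈ R
      rw [hψx]; exact hb⟩
    (isSt_compact.inter_right (hRc.isClosed.preimage (res G).continuous))
    (isSt_convex.inter (res_convex hRv))
    (by
      rintro g φ ⟨h1, h2⟩
      refine ⟨conjAct_isSt lreg_rep g h1, ?_⟩
      show res G _ ∈ R
      rw [res_conj]
      exact hRi g _ h2)
  have hZ := glasner (conjAct_one lreg_rep) (conjAct_mul lreg_rep) hmin
  have hsub : closure (L'.extremePoints ℝ) ⊆ L' :=
    closure_minimal extremePoints_subset hmin.cpt.isClosed
  exact ⟨_, hZ, fun z hz => (hL' (hsub hz)).1, fun z hz => (hL' (hsub hz)).2⟩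

theorem exists_Z {X : Set (WeakDual ℂ (redCstar G))} (hXS : ∀ x ∈ X, IsSt x)
    (hX : IsDualBoundary G X) (hne : X ≠ {tau G}) :
    ∃ Z : Set (WeakDual ℂ (BG G)), BdryFn (conjAct lreg) Z ∧ (∀ z ∈ Z, IsSt z) ∧
      ∃ z ∈ Z, ∃ s : G, s ≠ 1 ∧ z (lreg s) ≠ 0 := by
  have hc : CompactSpace X := isCompact_iff_compactSpace.1 hX.2.1
  obtain ⟨x1, hx1⟩ := hX.1
  have hinv : ∀ g : G, ∀ x ∈ X, conjAct uu g x ∈ X := by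
    intro g x hx
    obtain ⟨-, -, hi, -⟩ := hX
    rw [← dualAct_eq]; exact hi g x hx
  obtain ⟨Z, hZ, hZS, hZR⟩ := exists_Z_aux
    (R := {b | b ∈ {φ : WeakDual ℂ (redCstar G) | IsSt φ} ∧ ∃ ν ∈ PX X, IsBar X ν b})
    (fun b hb => hb.1)
    (by
      obtain ⟨ν, hν, hνf⟩ := PX_delta (⟨x1, hx1⟩ : X)
      exact ⟨x1, hXS x1 hx1, ν, hν, fun l => hνf _⟩)
    (bars_compact isSt_compact (PX_compact X))
    (bars_convex isSt_convex)
    (by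
      rintro g b ⟨hb, μ, hμ, hbμ⟩
      exact ⟨conjAct_isSt uu_rep g hb, pull μ (actX hinv g), pull_mem hμ _, bar_pull hinv g hbμ⟩)
  refine ⟨Z, hZ, hZS, ?_⟩
  by_contra hcon
  push Not at hcon
  obtain ⟨z, hz⟩ := hZ.ne
  have hzτ : res G z = tau G := by
    apply ext_uu
    intro g
    rw [res_apply, coe_uu]
    by_cases hg : g = 1
    · subst hg; rw [tau_uu_one, lreg_rep.one]; exact (hZS z hz).1
    · rw [tau_uu_ne hg]; exact hcon z hz g hg
  obtain ⟨-, ν, hν, hb⟩ := hZR z hz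
  rw [hzτ] at hb
  exact hne (bdry_bar_tau hX hν hb)

end Ext


section Cov

variable {A : Type*} [CStarAlgebra A]

/-- real functions as complex functions -/
def ofR {X : Type*} [TopologicalSpace X] (k : C(X, ℝ)) : C(X, ℂ) :=
  ⟨fun x => (k x : ℂ), Complex.continuous_ofReal.comp k.continuous⟩

/-- squared modulus of the difference to a constant -/
def sqd {X : Type*} [TopologicalSpace X] (f : C(X, ℂ)) (c : ℂ) : C(X, ℝ) :=
  ⟨fun x => ‖f x - c‖ ^ 2, by fun_prop⟩

theorem ofR_sqd {X : Type*} [TopologicalSpace X] (f : C(X, ℂ)) (c : ℂ) :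
    ofR (sqd f c) = star (f - c • 1) * (f - c • 1) := by
  ext x
  show ((‖f x - c‖ ^ 2 : ℝ) : ℂ) = (starRingEnd ℂ) (f x - c • 1) * (f x - c • 1)
  rw [smul_eq_mul, mul_one, Complex.conj_mul']; simp

theorem ofR_pos {X : Type*} [TopologicalSpace X] {k : C(X, ℝ)} (hk : 0 ≤ k) :
    ∃ q : C(X, ℂ), ofR k = star q * q := by
  refine ⟨⟨fun x => ((Real.sqrt (k x) : ℝ) : ℂ), by fun_prop⟩, ?_⟩
  ext x
  show (k x : ℂ) = (starRingEnd ℂ) ((Real.sqrt (k x) : ℝ) : ℂ) * ((Real.sqrt (k x) : ℝ) : ℂ)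
  rw [Complex.conj_ofReal, ← Complex.ofReal_mul, Real.mul_self_sqrt (show 0 ≤ k x from hk x)]

/-- The functional on `C(Z)` induced by a state and a representation. -/
def nuOf {X : Type*} [TopologicalSpace X] [CompactSpace X] (M : C(X, ℂ) →⋆ₐ[ℂ] A)
    {φ : WeakDual ℂ A} (h : IsSt φ) : WeakDual ℝ C(X, ℝ) :=
  StrongDual.toWeakDual (LinearMap.mkContinuous
    { toFun := fun k => (φ (M (ofR k))).re
      map_add' := fun k l => by
        have : ofR (k + l) = ofR k + ofR l := by
          ext x; show ((k x + l x : ℝ) : ℂ) = (k x : ℂ) + (l x : ℂ); simp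
        rw [this, map_add, map_add, Complex.add_re]
      map_smul' := fun c k => by
        have : ofR (c • k) = (c : ℂ) • ofR k := by
          ext x; show ((c * k x : ℝ) : ℂ) = (c : ℂ) * (k x : ℂ); simp
        rw [this, map_smul, map_smul]
        simp } 1 (by
      intro k
      show ‖(φ (M (ofR k))).re‖ ≤ 1 * ‖k‖
      rw [one_mul]
      refine (Complex.abs_re_le_norm _).trans ((h.norm_le _).trans ?_)
      refine (NonUnitalStarAlgHom.norm_apply_le M (ofR k)).trans ?_
      rw [ContinuousMap.norm_le _ (norm_nonneg _)]
      intro x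
      show ‖(k x : ℂ)‖ ≤ ‖k‖
      rw [Complex.norm_real]
      exact k.norm_coe_le_norm x))

theorem nuOf_apply {X : Type*} [TopologicalSpace X] [CompactSpace X] (M : C(X, ℂ) →⋆ₐ[ℂ] A)
    {φ : WeakDual ℂ A} (h : IsSt φ) (k : C(X, ℝ)) : nuOf M h k = (φ (M (ofR k))).re := rfl

theorem nuOf_mem {X : Type*} [TopologicalSpace X] [CompactSpace X] (M : C(X, ℂ) →⋆ₐ[ℂ] A)
    {φ : WeakDual ℂ A} (h : IsSt φ) : nuOf M h ∈ PX X := by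
  refine ⟨?_, fun k hk => ?_⟩
  · rw [nuOf_apply]
    have : ofR (1 : C(X, ℝ)) = 1 := by ext x; show ((1 : ℝ) : ℂ) = 1; simp
    rw [this, map_one, h.1, Complex.one_re]
  · rw [nuOf_apply]
    obtain ⟨q, hq⟩ := ofR_pos hk
    rw [hq, map_mul, map_star]
    exact h.re_nonneg _

/-- Basic estimate: `|φ(M_f) - c|² ≤ φ(M_{|f-c|²})`, and with an extra factor. -/
theorem est {X : Type*} [TopologicalSpace X] [CompactSpace X] (M : C(X, ℂ) →⋆ₐ[ℂ] A)
    {φ : WeakDual ℂ A} (h : IsSt φ) (f : C(X, ℂ)) (c : ℂ) (T : A) :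
    ‖φ (star T * M f) - c * φ (star T)‖ ^ 2 ≤
      (φ (star T * T)).re * (φ (M (ofR (sqd f c)))).re := by
  have := h.cs T (M (f - c • 1))
  rw [← map_star, ← map_mul, ← ofR_sqd] at this
  rw [map_sub, map_smul, map_one, mul_sub, map_sub, mul_smul_comm, mul_one, map_smul,
    smul_eq_mul] at this
  exact this

/-- covariance -/
structure Cov (u : G → A) {Z : Set (WeakDual ℂ A)} (hZ : BdryFn (conjAct u) Z) [CompactSpace Z]
    (M : C(Z, ℂ) →⋆ₐ[ℂ] A) : Prop where
  rep : URep u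
  st : ∀ z ∈ Z, IsSt z
  cov : ∀ g f, u g⁻¹ * (M f * u g) = M (f.comp (actX hZ.inv g))

variable {u : G → A} {Z : Set (WeakDual ℂ A)} {hZ : BdryFn (conjAct u) Z} [CompactSpace Z]
  {M : C(Z, ℂ) →⋆ₐ[ℂ] A}

theorem Cov.cov2 (hM : Cov u hZ M) (g : G) (f : C(Z, ℂ)) :
    M f * u g = u g * M (f.comp (actX hZ.inv g)) := by
  rw [← hM.cov g f, ← mul_assoc, hM.rep.mul_inv, one_mul]

theorem Cov.conj (hM : Cov u hZ M) (g : G) (φ : WeakDual ℂ A) (f : C(Z, ℂ)) :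
    conjAct u g φ (M f) = φ (M (f.comp (actX hZ.inv g))) := by
  rw [conjAct_apply, hM.cov]

theorem Cov.eval (hM : Cov u hZ M) (z : Z) (f : C(Z, ℂ)) : z.1 (M f) = f z := by
  obtain ⟨z0, hz0⟩ := hZ.ne
  obtain ⟨δ, hδ, hδf⟩ := PX_delta (⟨z0, hz0⟩ : Z)
  let evM : C(Z, ℝ) := ⟨fun y => ‖y.1 (M f) - z.1 (M f)‖, by
    have : Continuous fun y : Z => y.1 (M f) :=
      (WeakDual.eval_continuous (M f)).comp continuous_subtype_val
    fun_prop⟩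
  have hsq : 0 ≤ sqd f (f z) := fun y => sq_nonneg _
  have hev : 0 ≤ evM := fun y => norm_nonneg _
  by_contra hne
  have hd : 0 < ‖z.1 (M f) - f z‖ := norm_pos_iff.2 (sub_ne_zero.2 hne)
  set d := ‖z.1 (M f) - f z‖ with hdd
  obtain ⟨ε, hε, hε1, hε2⟩ : ∃ ε : ℝ, 0 < ε ∧ 2 * ε < d / 2 ∧ 2 * ε < (d / 2) ^ 2 := by
    refine ⟨min (d / 8) (d ^ 2 / 16), by positivity, ?_, ?_⟩
    · have := min_le_left (d / 8) (d ^ 2 / 16); linarith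
    · have := min_le_right (d / 8) (d ^ 2 / 16)
      have h2 : 0 < d ^ 2 := by positivity
      nlinarith
  have hz0s := hM.st z0 hz0
  have hmem := PX_convex Z (nuOf_mem M hz0s) hδ (a := 1 / 2) (b := 1 / 2) (by norm_num)
    (by norm_num) (by norm_num)
  obtain ⟨g, hg⟩ := hZ.sp _ hmem z (sqd f (f z) + evM) (add_nonneg hsq hev)
    (by show ‖f z - f z‖ ^ 2 + ‖z.1 (M f) - z.1 (M f)‖ = 0; simp) ε hε
  have e1 : (1 / 2 : ℝ) * nuOf M hz0s ((sqd f (f z) + evM).comp (actX hZ.inv g)) +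
      (1 / 2 : ℝ) * δ ((sqd f (f z) + evM).comp (actX hZ.inv g)) < ε := hg
  have p1 := (nuOf_mem M hz0s).2 ((sqd f (f z) + evM).comp (actX hZ.inv g))
    (fun y => (add_nonneg hsq hev) (actX hZ.inv g y))
  have p2 := hδ.2 ((sqd f (f z) + evM).comp (actX hZ.inv g)) (fun y => (add_nonneg hsq hev) (actX hZ.inv g y))
  have p3 : nuOf M hz0s ((sqd f (f z)).comp (actX hZ.inv g)) ≤
      nuOf M hz0s ((sqd f (f z) + evM).comp (actX hZ.inv g)) :=
    PX_mono (nuOf_mem M hz0s) fun y => le_add_of_nonneg_right (hev _)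
  let w : Z := actX hZ.inv g ⟨z0, hz0⟩
  have hw : IsSt w.1 := hM.st w.1 w.2
  have q1 : (w.1 (M (ofR (sqd f (f z))))).re < 2 * ε := by
    have : w.1 (M (ofR (sqd f (f z)))) = z0 (M (ofR ((sqd f (f z)).comp (actX hZ.inv g)))) :=
      hM.conj g z0 _
    rw [this, ← nuOf_apply M hz0s]
    linarith
  have q2 : ‖w.1 (M f) - z.1 (M f)‖ < 2 * ε := by
    have h3 : δ ((sqd f (f z) + evM).comp (actX hZ.inv g)) =
      ‖f w - f z‖ ^ 2 + ‖w.1 (M f) - z.1 (M f)‖ := hδf _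
    have := sq_nonneg ‖f w - f z‖
    linarith
  have q3 := est M hw f (f z) 1
  rw [star_one, one_mul, one_mul, hw.1, mul_one, Complex.one_re, one_mul] at q3
  have q4 : ‖w.1 (M f) - f z‖ < d / 2 := by
    refine lt_of_pow_lt_pow_left₀ 2 (by positivity) ?_
    linarith
  have q5 : d ≤ ‖w.1 (M f) - z.1 (M f)‖ + ‖w.1 (M f) - f z‖ := by
    rw [hdd, norm_sub_rev (w.1 (M f)) (z.1 (M f))]
    exact norm_sub_le_norm_sub_add_norm_sub _ _ _
  linarith

/-- A state which is a point evaluation on `M` is a module map. -/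
theorem eval_right {φ : WeakDual ℂ A} (h : IsSt φ) {z : Z} (he : ∀ f, φ (M f) = f z) (T : A)
    (f : C(Z, ℂ)) : φ (T * M f) = f z * φ T := by
  have := est M h f (f z) (star T)
  rw [star_star, he] at this
  have e : (ofR (sqd f (f z))) z = 0 := by
    show ((‖f z - f z‖ ^ 2 : ℝ) : ℂ) = 0
    simp
  rw [e, Complex.zero_re, mul_zero] at this
  have h2 : ‖φ (T * M f) - f z * φ T‖ = 0 := by
    have := le_antisymm this (sq_nonneg _)
    exact (pow_eq_zero_iff two_ne_zero).1 this
  exact sub_eq_zero.1 (norm_eq_zero.1 h2)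

theorem eval_left {φ : WeakDual ℂ A} (h : IsSt φ) {z : Z} (he : ∀ f, φ (M f) = f z) (T : A)
    (f : C(Z, ℂ)) : φ (M f * T) = f z * φ T := by
  have h1 := eval_right h he (star T) (star f)
  rw [map_star, ← star_mul, h.map_star, h.map_star] at h1
  have h2 := congrArg star h1
  rw [star_mul'] at h2
  simpa using h2

/-- evaluation of functionals as a continuous function -/
def evF (Z : Set (WeakDual ℂ A)) (T : A) : C(Z, ℂ) :=
  ⟨fun y => y.1 T, (WeakDual.eval_continuous T).comp continuous_subtype_val⟩

theorem Cov.fix (hM : Cov u hZ M) {z : WeakDual ℂ A} (hz : z ∈ Z) {s : G} (hs : z (u s) ≠ 0) :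
    conjAct u s z = z := by
  have hzs := hM.st z hz
  have he : ∀ f, z (M f) = f ⟨z, hz⟩ := fun f => hM.eval ⟨z, hz⟩ f
  apply DFunLike.ext
  intro T
  have h1 := congrArg z (hM.cov2 s (evF Z T))
  rw [eval_left hzs he, eval_right hzs he] at h1
  exact (mul_right_cancel₀ hs h1).symm

end Cov


section StepThree

variable {A S : Type*} [CStarAlgebra A] [CStarAlgebra S]

theorem simple_pos (hsimple : ∀ I : TwoSidedIdeal S, IsClosed (I : Set S) → I = ⊥ ∨ I = ⊤)
    {χ : WeakDual ℂ S} (hχ : IsSt χ) {c : S} (hc : IsSelfAdjoint c)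
    (h : ∀ b : S, 0 ≤ (χ (star b * (c * b))).re) : ∃ q, c = star q * q := by
  let := CStarAlgebra.spectralOrder S
  have := CStarAlgebra.spectralOrderedRing S
  have hn0 : 0 ≤ c⁻ := CFC.negPart_nonneg c
  have hsub : c⁺ - c⁻ = c := CFC.posPart_sub_negPart c hc
  have hnp : c⁻ * c⁺ = 0 := CFC.negPart_mul_posPart c
  set n := c⁻ with hn
  have hns : star n = n := (IsSelfAdjoint.of_nonneg hn0).star_eq
  obtain ⟨m, hm⟩ := CStarAlgebra.nonneg_iff_eq_star_mul_self.1 hn0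
  have hncn : n * c * n = - (star (m * n) * (m * n)) := by
    rw [star_mul, hns]
    have : n * star m * (m * n) = n * (star m * m) * n := by simp only [mul_assoc]
    rw [mul_assoc n (star m), ← mul_assoc (star m) m, ← hm]
    conv_lhs => rw [← hsub]
    rw [mul_sub, hnp, zero_sub, neg_mul, mul_assoc]
  set q := m * n with hq
  have h0 : ∀ d, (χ (star (q * d) * (q * d))).re = 0 := by
    intro d
    refine le_antisymm ?_ (hχ.re_nonneg _)
    have h1 := h (n * d)
    have e : star (n * d) * (c * (n * d)) = - (star (q * d) * (q * d)) := by
      rw [star_mul, star_mul q d, hns]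
      calc _ = star d * (n * c * n) * d := by simp only [mul_assoc]
        _ = _ := by rw [hncn]; simp only [mul_neg, neg_mul, mul_assoc]
    rw [e, map_neg, Complex.neg_re] at h1
    linarith
  have h1 : ∀ e d, χ (e * (star q * q) * d) = 0 := by
    intro e d
    have h2 := hχ.cs (q * star e) (q * d)
    rw [h0 d, mul_zero] at h2
    have h3 : ‖χ (star (q * star e) * (q * d))‖ = 0 :=
      (pow_eq_zero_iff two_ne_zero).1 (le_antisymm h2 (sq_nonneg _))
    rw [norm_eq_zero] at h3
    rw [star_mul, star_star] at h3
    simpa only [mul_assoc] using h3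
  let J : TwoSidedIdeal S := TwoSidedIdeal.mk' {a | ∀ e d, χ (e * a * d) = 0}
    (by intro e d; rw [mul_zero, zero_mul, map_zero])
    (by
      intro x y hx hy e d
      rw [mul_add, add_mul, map_add, hx e d, hy e d, add_zero])
    (by
      intro x hx e d
      rw [mul_neg, neg_mul, map_neg, hx e d, neg_zero])
    (by
      intro x y hy e d
      rw [← mul_assoc e x y]; exact hy _ _)
    (by
      intro x y hx e d
      rw [← mul_assoc e x y, mul_assoc]; exact hx _ _)
  have hJ : (J : Set S) = {a | ∀ e d, χ (e * a * d) = 0} := TwoSidedIdeal.coe_mk' _ _ _ _ _ _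
  have hcl : IsClosed (J : Set S) := by
    rw [hJ]
    have : {a | ∀ e d, χ (e * a * d) = 0} = ⋂ e : S, ⋂ d : S, {a | χ (e * a * d) = 0} := by
      ext a; simp
    rw [this]
    refine isClosed_iInter fun e => isClosed_iInter fun d => ?_
    refine isClosed_eq ((map_continuous χ).comp ?_) continuous_const
    fun_prop
  have hq0 : q = 0 := by
    rcases hsimple J hcl with hb | ht
    · have : star q * q ∈ (J : Set S) := by rw [hJ]; exact h1
      have h2 : star q * q ∈ J := this
      rw [hb, TwoSidedIdeal.mem_bot] at h2
      exact CStarRing.star_mul_self_eq_zero_iff q |>.1 h2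
    · exfalso
      have h2 : (1 : S) ∈ (J : Set S) := by
        show (1 : S) ∈ J
        rw [ht]; trivial
      rw [hJ] at h2
      have := h2 1 1
      rw [one_mul, one_mul, hχ.1] at this
      exact one_ne_zero this
  have hnn : star n * n = 0 := by
    calc star n * n = star m * q := by rw [hns, hq, ← mul_assoc, ← hm]
      _ = 0 := by rw [hq0, mul_zero]
  have hn1 : n = 0 := CStarRing.star_mul_self_eq_zero_iff n |>.1 hnn
  have hcp : 0 ≤ c := (CFC.negPart_eq_zero_iff c hc).1 hn1
  exact CStarAlgebra.nonneg_iff_eq_star_mul_self.1 hcp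

theorem IsSt.conj_le {ψ : WeakDual ℂ A} (h : IsSt ψ) (T b : A) :
    (ψ (star b * (T * b))).re ≤ ‖T‖ * (ψ (star b * b)).re := by
  let := CStarAlgebra.spectralOrder A
  have := CStarAlgebra.spectralOrderedRing A
  have h1 : star T * T ≤ algebraMap ℝ A (‖T‖ ^ 2) := CStarAlgebra.star_mul_le_algebraMap_norm_sq
  have h2 := h.nonneg (sub_nonneg.2 (star_left_conjugate_le_conjugate h1 b))
  have e : algebraMap ℝ A (‖T‖ ^ 2) = ((‖T‖ ^ 2 : ℝ) : ℂ) • (1 : A) := by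
    rw [Algebra.algebraMap_eq_smul_one]; rw [Complex.coe_smul]
  rw [map_sub, e, mul_smul_comm, smul_mul_assoc, map_smul, mul_one] at h2
  have h3 := (Complex.le_def.1 h2).1
  rw [smul_eq_mul, Complex.sub_re, Complex.re_ofReal_mul, Complex.zero_re] at h3
  have h4 := h.cs b (T * b)
  have e2 : star (T * b) * (T * b) = star b * (star T * T) * b := by
    rw [star_mul]; simp only [mul_assoc]
  rw [e2] at h4
  have h5 := h.re_nonneg b
  refine (Complex.re_le_norm _).trans ?_
  refine abs_le_of_sq_le_sq' (a := ‖ψ (star b * (T * b))‖) ?_ (by positivity) |>.2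
  calc _ ≤ _ := h4
    _ ≤ (ψ (star b * b)).re * (‖T‖ ^ 2 * (ψ (star b * b)).re) := by gcongr; linarith
    _ = _ := by ring

/-- the set of admissible bounds -/
def bdset (j : S →⋆ₐ[ℂ] A) (ψ : WeakDual ℂ A) (T : A) : Set ℝ :=
  {r | ∀ b : S, (ψ (star (j b) * (T * j b))).re ≤ r * (ψ (star (j b) * j b)).re}

variable {j : S →⋆ₐ[ℂ] A} {ψ : WeakDual ℂ A}

theorem bdset_norm (hψ : IsSt ψ) (T : A) : ‖T‖ ∈ bdset j ψ T := fun b => hψ.conj_le T (j b)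

theorem bdset_lb (hψ : IsSt ψ) (T : A) : BddBelow (bdset j ψ T) := by
  refine ⟨(ψ T).re, fun r hr => ?_⟩
  have := hr 1
  rw [map_one, star_one, one_mul, one_mul, mul_one, hψ.1, Complex.one_re, mul_one] at this
  exact this

theorem bdset_smul {c : ℝ} (hc : 0 < c) (T : A) {r : ℝ} (h : r ∈ bdset j ψ T) :
    c * r ∈ bdset j ψ (c • T) := by
  intro b
  have e : star (j b) * ((c • T) * j b) = (c : ℂ) • (star (j b) * (T * j b)) := by
    rw [← Complex.coe_smul, smul_mul_assoc, mul_smul_comm]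
  rw [e, map_smul, smul_eq_mul, Complex.re_ofReal_mul, mul_assoc]
  exact mul_le_mul_of_nonneg_left (h b) hc.le

theorem step3 (hj : Function.Injective j)
    (hsimple : ∀ I : TwoSidedIdeal S, IsClosed (I : Set S) → I = ⊥ ∨ I = ⊤)
    (hψ : IsSt ψ) {τ : WeakDual ℂ S} (hτ : IsSt τ) :
    ∃ ω : WeakDual ℂ A, IsSt ω ∧ (∀ a : S, ω (j a) = τ a) ∧
      ∀ T, (∀ b : S, ψ (star (j b) * (T * j b)) = 0) → ω T = 0 := by
  let N : A → ℝ := fun T => sInf (bdset j ψ T)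
  have Nle : ∀ T r, r ∈ bdset j ψ T → N T ≤ r := fun T r hr => csInf_le (bdset_lb hψ T) hr
  have leN : ∀ T s, (∀ r ∈ bdset j ψ T, s ≤ r) → s ≤ N T := fun T s h =>
    le_csInf ⟨_, bdset_norm hψ T⟩ h
  have Nhom1 : ∀ c : ℝ, 0 < c → ∀ T, c * N T ≤ N (c • T) := by
    intro c hc T
    apply leN
    intro r hr
    have h1 := bdset_smul (inv_pos.2 hc) (c • T) hr
    rw [smul_smul, inv_mul_cancel₀ hc.ne', one_smul] at h1
    have := Nle _ _ h1
    calc c * N T ≤ c * (c⁻¹ * r) := by gcongr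
      _ = r := by field_simp
  have Nhom : ∀ c : ℝ, 0 < c → ∀ T, N (c • T) = c * N T := by
    intro c hc T
    refine le_antisymm ?_ (Nhom1 c hc T)
    have := Nhom1 c⁻¹ (inv_pos.2 hc) (c • T)
    rw [smul_smul, inv_mul_cancel₀ hc.ne', one_smul] at this
    calc N (c • T) = c * (c⁻¹ * N (c • T)) := by field_simp
      _ ≤ c * N T := by gcongr
  have Nadd : ∀ x y, N (x + y) ≤ N x + N y := by
    intro x y
    have h1 : ∀ r ∈ bdset j ψ x, ∀ s ∈ bdset j ψ y, N (x + y) ≤ r + s := by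
      intro r hr s hs
      apply Nle
      intro b
      rw [add_mul, mul_add, map_add, Complex.add_re, add_mul]
      exact add_le_add (hr b) (hs b)
    have h2 : ∀ r ∈ bdset j ψ x, N (x + y) - r ≤ N y := by
      intro r hr
      apply leN
      intro s hs
      linarith [h1 r hr s hs]
    have h3 : N (x + y) - N y ≤ N x := by
      apply leN
      intro r hr
      linarith [h2 r hr]
    linarith
  let χ : WeakDual ℂ S := StrongDual.toWeakDual (LinearMap.mkContinuous
    { toFun := fun a => ψ (j a)
      map_add' := fun a b => by rw [map_add, map_add]
      map_smul' := fun c a => by rw [map_smul, map_smul]; rfl } 1 (by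
      intro a
      rw [one_mul]
      exact (hψ.norm_le _).trans (NonUnitalStarAlgHom.norm_apply_le j a)))
  have hχa : ∀ a, χ a = ψ (j a) := fun a => rfl
  have hχ : IsSt χ := by
    refine ⟨by rw [hχa, map_one, hψ.1], fun a => ?_⟩
    rw [hχa, map_mul, map_star]; exact hψ.2 _
  have hτN : ∀ a : S, (τ a).re ≤ N (j a) := by
    intro a
    apply leN
    intro r hr
    let c : S := (r : ℂ) • 1 - (1 / 2 : ℂ) • (a + star a)
    have hcs : IsSelfAdjoint c := by
      show star c = c
      simp only [c, star_sub, star_smul, star_add, star_star, star_one]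
      rw [add_comm (star a) a]
      simp
    have hre : ∀ {B : Type _} [CStarAlgebra B] (φ : WeakDual ℂ B) (_ : IsSt φ) (x : B),
        (φ ((1 / 2 : ℂ) • (x + star x))).re = (φ x).re := by
      intro B _ φ hφ x
      rw [map_smul, map_add, hφ.map_star]
      simp
      ring
    obtain ⟨q, hq⟩ := simple_pos hsimple hχ hcs (by
      intro b
      have e : star b * (c * b) = (r : ℂ) • (star b * b) -
          (1 / 2 : ℂ) • (star b * (a * b) + star (star b * (a * b))) := by
        simp only [c, sub_mul, mul_sub, smul_mul_assoc, mul_smul_comm, one_mul, add_mul, mul_add,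
          star_mul, star_star, mul_assoc]
      rw [e, map_sub, Complex.sub_re, hre χ hχ, map_smul, smul_eq_mul, Complex.re_ofReal_mul, hχa,
        hχa, map_mul j, map_mul j, map_mul j, map_star j]
      linarith [hr b])
    have h1 := hτ.re_nonneg q
    rw [← hq] at h1
    simp only [c] at h1
    rw [map_sub, Complex.sub_re, hre τ hτ, map_smul, smul_eq_mul, Complex.re_ofReal_mul, hτ.1,
      Complex.one_re, mul_one] at h1
    linarith
  let jl : S →ₗ[ℝ] A := j.toAlgHom.toLinearMap.restrictScalars ℝ
  have hjl : Function.Injective jl := hj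
  let eqv := LinearEquiv.ofInjective jl hjl
  let τr : S →ₗ[ℝ] ℝ :=
    { toFun := fun a => (τ a).re
      map_add' := fun a b => by rw [map_add, Complex.add_re]
      map_smul' := fun c a => by
        rw [← Complex.coe_smul, map_smul, smul_eq_mul, Complex.re_ofReal_mul]; rfl }
  obtain ⟨g, hg1, hg2⟩ := exists_extension_of_le_sublinear
    (⟨LinearMap.range jl, τr.comp eqv.symm.toLinearMap⟩ : A →ₗ.[ℝ] ℝ) N Nhom Nadd (by
      rintro ⟨x, hx⟩
      obtain ⟨a, rfl⟩ := hx
      show (τ (eqv.symm ⟨jl a, ⟨a, rfl⟩⟩)).re ≤ N (jl a)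
      have : eqv.symm ⟨jl a, ⟨a, rfl⟩⟩ = a := eqv.symm_apply_apply a
      rw [this]
      exact hτN a)
  have hg3 : ∀ a : S, g (j a) = (τ a).re := by
    intro a
    have h1 := hg1 ⟨jl a, ⟨a, rfl⟩⟩
    have h2 : eqv.symm ⟨jl a, ⟨a, rfl⟩⟩ = a := eqv.symm_apply_apply a
    have h3 : g (jl a) = (τ (eqv.symm ⟨jl a, ⟨a, rfl⟩⟩)).re := h1
    rw [h2] at h3
    exact h3
  let ω0 : Module.Dual ℂ A := Module.Dual.extendRCLike (𝕜 := ℂ) g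
  have hre : ∀ T, (ω0 T).re = g T := fun T => Module.Dual.re_extendRCLike_apply (𝕜 := ℂ) g T
  have hnorm : ∀ T, ‖ω0 T‖ ≤ ‖T‖ := by
    intro T
    have h1 : ‖ω0 T‖ ^ 2 ≤ ‖ω0 T‖ * ‖T‖ := by
      have h2 : ‖ω0 T‖ ^ 2 = g (starRingEnd ℂ (ω0 T) • T) :=
        Module.Dual.norm_extendRCLike_apply_sq g T
      rw [h2]
      refine ((hg2 _).trans (Nle _ _ (bdset_norm hψ _))).trans ?_
      rw [norm_smul, RCLike.norm_conj]
    by_contra hlt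
    push Not at hlt
    have : 0 < ‖ω0 T‖ := lt_of_le_of_lt (norm_nonneg _) hlt
    nlinarith
  let ω : WeakDual ℂ A := StrongDual.toWeakDual (LinearMap.mkContinuous ω0 1 (by
    intro T; rw [one_mul]; exact hnorm T))
  have hω : ∀ T, ω T = ω0 T := fun T => rfl
  have hωτ : ∀ a : S, ω (j a) = τ a := by
    intro a
    rw [hω]
    apply Complex.ext
    · rw [hre, hg3]
    · have h1 : (ω0 (j a)).im = - g (Complex.I • j a) := Module.Dual.im_extendRCLike_apply (𝕜 := ℂ) g (j a)
      rw [h1, ← map_smul, hg3, map_smul]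
      simp
  refine ⟨ω, IsSt.of_norm_le ?_ hnorm, hωτ, ?_⟩
  · rw [← map_one j, hωτ, hτ.1]
  · intro T hT
    rw [hω]
    have h2 : ‖ω0 T‖ ^ 2 = g (starRingEnd ℂ (ω0 T) • T) :=
      Module.Dual.norm_extendRCLike_apply_sq g T
    have h3 : N (starRingEnd ℂ (ω0 T) • T) ≤ 0 := by
      apply Nle
      intro b
      rw [smul_mul_assoc, mul_smul_comm, map_smul, hT b]
      simp
    have h4 := h2.le.trans ((hg2 _).trans h3)
    exact norm_eq_zero.1 ((pow_eq_zero_iff two_ne_zero).1 (le_antisymm h4 (sq_nonneg _)))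

end StepThree


section Final

variable {A S : Type*} [CStarAlgebra A] [CStarAlgebra S]

theorem absorb {ψ : WeakDual ℂ A} (hψ : IsSt ψ) {w : A} (hw : star w * w = 1) (h1 : ψ w = 1)
    (T : A) : ψ (T * w) = ψ T := by
  have h2 := hψ.cs (star T) (w - 1)
  have e : star (w - 1) * (w - 1) = (1 + 1) - w - star w := by
    rw [star_sub, star_one, sub_mul, mul_sub, hw]; noncomm_ring
  have e2 : (ψ (star (w - 1) * (w - 1))).re = 0 := by
    rw [e, map_sub, map_sub, map_add, hψ.map_star, h1, hψ.1]
    simp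
  rw [e2, mul_zero, star_star] at h2
  have h3 : ‖ψ (T * (w - 1))‖ = 0 :=
    (pow_eq_zero_iff two_ne_zero).1 (le_antisymm h2 (sq_nonneg _))
  rw [norm_eq_zero, mul_sub, mul_one, map_sub] at h3
  exact sub_eq_zero.1 h3

theorem absFinal {u : G → A} {Z : Set (WeakDual ℂ A)} {hZ : BdryFn (conjAct u) Z} [CompactSpace Z]
    {M : C(Z, ℂ) →⋆ₐ[ℂ] A} (hM : Cov u hZ M)
    {j : S →⋆ₐ[ℂ] A} (hj : Function.Injective j) {v : G → S} (hjv : ∀ g, j (v g) = u g)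
    (hdense : ∀ V : Submodule ℂ S, IsClosed (V : Set S) → (∀ g, v g ∈ V) → ∀ a, a ∈ V)
    (hsimple : ∀ I : TwoSidedIdeal S, IsClosed (I : Set S) → I = ⊥ ∨ I = ⊤)
    {τ : WeakDual ℂ S} (hτ : IsSt τ) (hτ0 : ∀ g, g ≠ 1 → τ (v g) = 0)
    {z : WeakDual ℂ A} (hz : z ∈ Z) {s : G} (hs1 : s ≠ 1) (hs : z (u s) ≠ 0)
    {ψ : WeakDual ℂ A} (hψ : IsSt ψ) (hψu : ∀ h, conjAct u h z = z → ψ (u h) = 1)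
    (hψM : ∀ f, ψ (M f) = f ⟨z, hz⟩) : False := by
  have hu := hM.rep
  let f : C(Z, ℂ) := evF Z (u s)
  let X0 : A := (u s - 1) * M f
  have hss : ∀ h, star (u h) * u h = 1 := by
    intro h; rw [hu.star, hu.inv_mul]
  have key : ∀ T k, ψ (T * (X0 * u k)) = 0 := by
    intro T k
    have e : T * (X0 * u k) = (T * ((u s - 1) * u k)) * M (f.comp (actX hZ.inv k)) := by
      simp only [X0, mul_assoc]
      rw [hM.cov2]
    rw [e, eval_right hψ hψM]
    by_cases h0 : (f.comp (actX hZ.inv k)) ⟨z, hz⟩ = 0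
    · rw [h0, zero_mul]
    · have h1 : (conjAct u k z) (u s) ≠ 0 := h0
      have h2 := hM.fix (hZ.inv k z hz) h1
      have h3 : conjAct u (k⁻¹ * s * k) z = z := by
        rw [conjAct_mul hu, conjAct_mul hu, h2, ← conjAct_mul hu, inv_mul_cancel, conjAct_one hu]
      have e2 : u s * u k = u k * u (k⁻¹ * s * k) := by
        rw [← hu.mul, ← hu.mul]; congr 1; group
      have e3 : T * ((u s - 1) * u k) = (T * u k) * u (k⁻¹ * s * k) - T * u k := by
        rw [sub_mul, one_mul, mul_sub, e2, ← mul_assoc T]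
      rw [e3, map_sub, absorb hψ (hss _) (hψu _ h3), sub_self, mul_zero]
  have key2 : ∀ T k (b : S), ψ (T * (X0 * (u k * j b))) = 0 := by
    intro T k b
    have hjc : Continuous j := AddMonoidHomClass.continuous_of_bound j 1 fun a => by
      rw [one_mul]; exact NonUnitalStarAlgHom.norm_apply_le j a
    let V : Submodule ℂ S :=
      { carrier := {b | ψ (T * (X0 * (u k * j b))) = 0}
        zero_mem' := by
          show ψ (T * (X0 * (u k * j 0))) = 0
          rw [map_zero, mul_zero, mul_zero, mul_zero, map_zero]
        add_mem' := by
          intro a b ha hb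
          have ha : ψ (T * (X0 * (u k * j a))) = 0 := ha
          have hb : ψ (T * (X0 * (u k * j b))) = 0 := hb
          show ψ (T * (X0 * (u k * j (a + b)))) = 0
          rw [map_add, mul_add, mul_add, mul_add, map_add, ha, hb, add_zero]
        smul_mem' := by
          intro c a ha
          have ha : ψ (T * (X0 * (u k * j a))) = 0 := ha
          show ψ (T * (X0 * (u k * j (c • a)))) = 0
          rw [map_smul, mul_smul_comm, mul_smul_comm, mul_smul_comm, map_smul, ha, smul_zero] }
    have hV : IsClosed (V : Set S) := by
      show IsClosed {b | ψ (T * (X0 * (u k * j b))) = 0}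
      refine isClosed_eq ((map_continuous ψ).comp ?_) continuous_const
      fun_prop
    refine hdense V hV (fun g => ?_) b
    show ψ (T * (X0 * (u k * j (v g)))) = 0
    rw [hjv, ← hu.mul]
    exact key _ _
  obtain ⟨ω, hω, hωτ, hωT⟩ := step3 hj hsimple hψ hτ
  let c : ℂ := z (u s)
  have hc : 0 < ‖c‖ := norm_pos_iff.2 hs
  obtain ⟨g, hg⟩ := hZ.sp (nuOf M hω) (nuOf_mem M hω) ⟨z, hz⟩ (sqd f c) (fun y => sq_nonneg _)
    (by show ‖z (u s) - z (u s)‖ ^ 2 = 0; simp) ((‖c‖ / 4) ^ 2) (by positivity)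
  have hωg := conjAct_isSt hu g hω
  have p1 : (conjAct u g ω (M (ofR (sqd f c)))).re < (‖c‖ / 4) ^ 2 := by
    rw [hM.conj]; exact hg
  have p2 : conjAct u g ω X0 = 0 := by
    rw [conjAct_apply]
    apply hωT
    intro b
    have := key2 (star (j b) * u g⁻¹) g b
    simpa only [mul_assoc] using this
  have p3 : conjAct u g ω (u s) = 0 := by
    rw [conjAct_apply, ← hu.mul, ← hu.mul, ← hjv, hωτ]
    apply hτ0
    intro h
    apply hs1
    have : s = g * (g⁻¹ * (s * g)) * g⁻¹ := by group
    rw [this, h]; group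
  have p4 : conjAct u g ω (u s * M f) = conjAct u g ω (M f) := by
    have : X0 = u s * M f - M f := by simp only [X0, sub_mul, one_mul]
    rw [this, map_sub] at p2
    exact sub_eq_zero.1 p2
  have q1 := est M hωg f c 1
  have q2 := est M hωg f c (star (u s))
  have e1 : u s * star (u s) = 1 := by rw [hu.star, hu.mul_inv]
  rw [star_one, one_mul, one_mul, hωg.1, mul_one, Complex.one_re, one_mul] at q1
  rw [star_star, p3, p4, mul_zero, sub_zero, e1, hωg.1, Complex.one_re, one_mul] at q2
  have r1 : ‖conjAct u g ω (M f) - c‖ < ‖c‖ / 4 :=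
    lt_of_pow_lt_pow_left₀ 2 (by positivity) (q1.trans_lt p1)
  have r2 : ‖conjAct u g ω (M f)‖ < ‖c‖ / 4 :=
    lt_of_pow_lt_pow_left₀ 2 (by positivity) (q2.trans_lt p1)
  have r3 : ‖c‖ ≤ ‖conjAct u g ω (M f)‖ + ‖conjAct u g ω (M f) - c‖ := by
    have := norm_sub_le (conjAct u g ω (M f)) (conjAct u g ω (M f) - c)
    rwa [sub_sub_cancel] at this
  linarith

end Final


theorem Dg_mem (φ : G → ℂ) (C : ℝ) (h : ∀ g, ‖φ g‖ ≤ C) (ξ : ℓ²(G, ℂ)) :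
    Memℓp (fun k => φ k * ξ k) 2 := by
  have hC : 0 ≤ C := (norm_nonneg _).trans (h 1)
  have hf : Summable fun i : G => ‖((C : ℂ) • ξ) i‖ ^ (2 : ℝ≥0∞).toReal :=
    (memℓp_gen_iff (by norm_num)).1 (lp.memℓp _)
  refine memℓp_gen (Summable.of_nonneg_of_le (fun k => by positivity) (fun k => ?_) hf)
  refine Real.rpow_le_rpow (norm_nonneg _) ?_ (by norm_num)
  show ‖φ k * ξ k‖ ≤ ‖(C : ℂ) * ξ k‖
  rw [norm_mul, norm_mul, Complex.norm_real, Real.norm_of_nonneg hC]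
  gcongr
  exact h k

/-- diagonal operators -/
def Dg (φ : G → ℂ) (C : ℝ) (h : ∀ g, ‖φ g‖ ≤ C) : BG G :=
  LinearMap.mkContinuous
    { toFun := fun ξ => (⟨fun k => φ k * ξ k, Dg_mem φ C h ξ⟩ : ℓ²(G, ℂ))
      map_add' := fun ξ η => by
        apply lp.ext; funext k
        show φ k * (ξ k + η k) = φ k * ξ k + φ k * η k
        ring
      map_smul' := fun c ξ => by
        apply lp.ext; funext k
        show φ k * (c * ξ k) = c * (φ k * ξ k)
        ring } C (by
      intro ξ
      have hC : 0 ≤ C := (norm_nonneg _).trans (h 1)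
      have : ‖(⟨fun k => φ k * ξ k, Dg_mem φ C h ξ⟩ : ℓ²(G, ℂ))‖ ≤ ‖(C : ℂ) • ξ‖ := by
        refine lp.norm_mono (by norm_num) fun k => ?_
        show ‖φ k * ξ k‖ ≤ ‖(C : ℂ) * ξ k‖
        rw [norm_mul, norm_mul, Complex.norm_real, Real.norm_of_nonneg hC]
        gcongr
        exact h k
      rw [norm_smul, Complex.norm_real, Real.norm_of_nonneg hC] at this
      exact this)

theorem Dg_apply (φ : G → ℂ) (C : ℝ) (h : ∀ g, ‖φ g‖ ≤ C) (ξ : ℓ²(G, ℂ)) (k : G) :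
    Dg φ C h ξ k = φ k * ξ k := rfl

theorem BG_ext {S T : BG G} (h : ∀ (ξ : ℓ²(G, ℂ)) k, S ξ k = T ξ k) : S = T := by
  apply ContinuousLinearMap.ext; intro ξ
  apply lp.ext; funext k
  exact h ξ k

theorem Dg_star (φ : G → ℂ) (C : ℝ) (h : ∀ g, ‖φ g‖ ≤ C) (φ' : G → ℂ) (C' : ℝ)
    (h' : ∀ g, ‖φ' g‖ ≤ C') (e : ∀ k, φ' k = (starRingEnd ℂ) (φ k)) :
    Dg φ' C' h' = star (Dg φ C h) := by
  rw [ContinuousLinearMap.star_eq_adjoint, ContinuousLinearMap.eq_adjoint_iff]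
  intro ξ η
  rw [lp.inner_eq_tsum, lp.inner_eq_tsum]
  congr 1
  funext k
  rw [Dg_apply, Dg_apply, e]
  simp [mul_comm, mul_assoc, mul_left_comm]

theorem Dg_conj (φ : G → ℂ) (C : ℝ) (h : ∀ g, ‖φ g‖ ≤ C) (g : G) :
    lreg g⁻¹ * (Dg φ C h * lreg g) = Dg (fun k => φ (g * k)) C (fun k => h _) := by
  apply BG_ext
  intro ξ k
  show lreg g⁻¹ (Dg φ C h (lreg g ξ)) k = _
  rw [lreg_apply, Dg_apply, Dg_apply, lreg_apply]
  simp

/-- orbit representation of continuous functions -/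
def Mrep {Z : Set (WeakDual ℂ (BG G))} [CompactSpace Z] (o : G → Z) : C(Z, ℂ) →⋆ₐ[ℂ] BG G where
  toFun f := Dg (fun k => f (o k)) ‖f‖ (fun k => f.norm_coe_le_norm _)
  map_one' := by
    apply BG_ext; intro ξ k; rw [Dg_apply]
    show (1 : ℂ) * ξ k = ξ k
    rw [one_mul]
  map_mul' f g := by
    apply BG_ext; intro ξ k; rw [Dg_apply]
    show (f (o k) * g (o k)) * ξ k = f (o k) * (g (o k) * ξ k)
    rw [mul_assoc]
  map_zero' := by
    apply BG_ext; intro ξ k; rw [Dg_apply]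
    show (0 : ℂ) * ξ k = 0
    rw [zero_mul]
  map_add' f g := by
    apply BG_ext; intro ξ k; rw [Dg_apply]
    show (f (o k) + g (o k)) * ξ k = f (o k) * ξ k + g (o k) * ξ k
    rw [add_mul]
  commutes' c := by
    apply BG_ext; intro ξ k; rw [Dg_apply, Algebra.algebraMap_eq_smul_one,
      Algebra.algebraMap_eq_smul_one]
    show (c * 1) * ξ k = c * ξ k
    rw [mul_one]
  map_star' f := Dg_star _ _ _ _ _ _ fun k => rfl

theorem Mrep_apply {Z : Set (WeakDual ℂ (BG G))} [CompactSpace Z] (o : G → Z) (f : C(Z, ℂ)) :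
    Mrep o f = Dg (fun k => f (o k)) ‖f‖ (fun k => f.norm_coe_le_norm _) := rfl

theorem Mrep_cov {Z : Set (WeakDual ℂ (BG G))} (hZ : BdryFn (conjAct (lreg (G := G))) Z)
    [CompactSpace Z] (hst : ∀ z ∈ Z, IsSt z) (z0 : Z) :
    Cov (lreg (G := G)) hZ (Mrep fun k => actX hZ.inv k z0) where
  rep := lreg_rep
  st := hst
  cov := by
    intro g f
    rw [Mrep_apply, Mrep_apply, Dg_conj]
    apply BG_ext; intro ξ k
    rw [Dg_apply, Dg_apply]
    congr 1
    show f (actX hZ.inv (g * k) z0) = f (actX hZ.inv g (actX hZ.inv k z0))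
    congr 1
    apply Subtype.ext
    exact conjAct_mul lreg_rep g k z0.1


theorem mean_gen {A : Type*} [CStarAlgebra A] {φ : WeakDual ℂ A} (hφ : IsSt φ) {ι : Type*}
    (F : Finset ι) (x y : ι → A) (h : ∀ i ∈ F, φ (x i) = φ (y i)) (c : ℝ) (Q : A)
    (e : ∑ i ∈ F, (x i - y i) - (c : ℂ) • 1 = star Q * Q) : c ≤ 0 := by
  have h1 := hφ.re_nonneg Q
  rw [← e, map_sub, map_sum, map_smul, hφ.1] at h1
  have h2 : ∑ i ∈ F, φ (x i - y i) = 0 := by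
    refine Finset.sum_eq_zero fun i hi => ?_
    rw [map_sub, h i hi, sub_self]
  rw [h2] at h1
  simp at h1
  exact h1

theorem mean_no {z : WeakDual ℂ (BG G)} (hz : IsSt z) {ι : Type u} [Fintype ι] (s : ι → G)
    (hs : ∀ i, conjAct (lreg (G := G)) (s i) z = z) (φ : ι → G → ℝ) (C : ℝ)
    (hφ : ∀ i g, |φ i g| ≤ C) (c : ℝ) (hc : 0 < c)
    (hcon : ∀ g, c ≤ ∑ i, (φ i (s i * g) - φ i g)) : False := by
  have hb : ∀ i g, ‖(φ i g : ℂ)‖ ≤ C := fun i g => by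
    rw [Complex.norm_real]; exact hφ i g
  let x : ι → BG G := fun i => Dg (fun k => (φ i (s i * k) : ℂ)) C (fun k => hb i _)
  let y : ι → BG G := fun i => Dg (fun k => (φ i k : ℂ)) C (fun k => hb i _)
  let q : G → ℝ := fun g => ∑ i, (φ i (s i * g) - φ i g) - c
  have hq0 : ∀ g, 0 ≤ q g := fun g => sub_nonneg.2 (hcon g)
  have hqb : ∀ g, q g ≤ ∑ _i : ι, (C + C) := by
    intro g
    have : ∑ i, (φ i (s i * g) - φ i g) ≤ ∑ _i : ι, (C + C) := by
      refine Finset.sum_le_sum fun i _ => ?_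
      have h1 := (abs_le.1 (hφ i (s i * g))).2
      have h2 := (abs_le.1 (hφ i g)).1
      linarith
    simp only [q]
    linarith
  have hQb : ∀ g, ‖((Real.sqrt (q g) : ℝ) : ℂ)‖ ≤ Real.sqrt (∑ _i : ι, (C + C)) := by
    intro g
    rw [Complex.norm_real, Real.norm_of_nonneg (Real.sqrt_nonneg _)]
    exact Real.sqrt_le_sqrt (hqb g)
  let Q : BG G := Dg (fun g => ((Real.sqrt (q g) : ℝ) : ℂ)) _ hQb
  have hQs : star Q = Q := (Dg_star _ _ _ _ _ _ fun k => (Complex.conj_ofReal _).symm).symm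
  have hxy : ∀ i ∈ Finset.univ, z (x i) = z (y i) := by
    intro i _
    have h1 : conjAct (lreg (G := G)) (s i) z (y i) = z (x i) := by
      rw [conjAct_apply, Dg_conj]
    rw [← h1, hs i]
  have := mean_gen hz Finset.univ x y hxy c Q (by
    rw [hQs]
    apply BG_ext
    intro ξ k
    have e1 : ((∑ i, (x i - y i) - (c : ℂ) • 1 : BG G) ξ) k
        = ∑ i, ((φ i (s i * k) : ℂ) * ξ k - (φ i k : ℂ) * ξ k) - (c : ℂ) * ξ k := by
      rw [sub_apply, sum_apply]
      rw [lp.coeFn_sub, Pi.sub_apply, lp.coeFn_sum, Finset.sum_apply]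
      rfl
    rw [e1]
    show _ = ((Real.sqrt (q k) : ℝ) : ℂ) * (((Real.sqrt (q k) : ℝ) : ℂ) * ξ k)
    rw [← mul_assoc, ← Complex.ofReal_mul, Real.mul_self_sqrt (hq0 k)]
    simp only [q]
    push_cast
    rw [sub_mul, Finset.sum_mul]
    congr 1
    refine Finset.sum_congr rfl fun i _ => ?_
    ring)
  linarith

open Classical in
/-- point mass in the space of summable functions -/
def pm (k : G) : lp (fun _ : G => ℝ) 1 := lp.single 1 k (1 : ℝ)

open Classical in
theorem pm_apply (k x : G) : (pm k : G → ℝ) x = if x = k then 1 else 0 := by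
  unfold pm
  simp [Pi.single_apply]

open Classical in
theorem pm_norm (k : G) : ‖(pm k : lp (fun _ : G => ℝ) 1)‖ = 1 := by
  unfold pm
  rw [lp.norm_single (by norm_num)]; simp

theorem day (H : Subgroup G) {ι : Type u} [Fintype ι] (s : ι → G) (hs : ∀ i, s i ∈ H)
    (hmean : ∀ (φ : ι → G → ℝ) (C : ℝ), (∀ i g, |φ i g| ≤ C) → ∀ c : ℝ, 0 < c →
      (∀ g, c ≤ ∑ i, (φ i (s i * g) - φ i g)) → False) (ε : ℝ) (hε : 0 < ε) :
    ∃ p : G →₀ ℝ, (∀ k, 0 ≤ p k) ∧ (∀ k, p k ≠ 0 → k ∈ H) ∧ p.sum (fun _ a => a) = 1 ∧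
      ∀ i, ∃ y : lp (fun _ : G => ℝ) 1, ‖y‖ < ε ∧ ∀ x, y x = p ((s i)⁻¹ * x) - p x := by
  classical
  let Δ : Set (G →₀ ℝ) :=
    {p | (∀ k, 0 ≤ p k) ∧ (∀ k, p k ≠ 0 → k ∈ H) ∧ p.sum (fun _ a => a) = 1}
  have hsum : ∀ p : G →₀ ℝ, p.sum (fun _ a => a) = Finsupp.linearCombination ℝ (fun _ : G => (1 : ℝ)) p := by
    intro p
    rw [Finsupp.linearCombination_apply]; simp
  have hΔ : Convex ℝ Δ := by
    rintro p ⟨hp1, hp2, hp3⟩ q ⟨hq1, hq2, hq3⟩ a b ha hb hab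
    refine ⟨fun k => ?_, fun k hk => ?_, ?_⟩
    · have h1 := hp1 k
      have h2 := hq1 k
      show 0 ≤ a * p k + b * q k
      positivity
    · by_contra hH
      have h1 : p k = 0 := by by_contra h; exact hH (hp2 k h)
      have h2 : q k = 0 := by by_contra h; exact hH (hq2 k h)
      apply hk
      show a * p k + b * q k = 0
      rw [h1, h2]; ring
    · rw [hsum] at hp3 hq3 ⊢
      rw [map_add, map_smul, map_smul, hp3, hq3]
      simpa using hab
  let d : G → (ι → lp (fun _ : G => ℝ) 1) := fun k i => pm (s i * k) - pm k
  let L : (G →₀ ℝ) →ₗ[ℝ] (ι → lp (fun _ : G => ℝ) 1) := Finsupp.linearCombination ℝ d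
  have hL : ∀ p i x, (L p i : G → ℝ) x = p ((s i)⁻¹ * x) - p x := by
    intro p i x
    induction p using Finsupp.induction_linear with
    | zero => rw [map_zero]; simp
    | add p q hp hq =>
      rw [map_add, Pi.add_apply, lp.coeFn_add, Pi.add_apply, hp, hq, Finsupp.add_apply,
        Finsupp.add_apply]; ring
    | single k a =>
      simp only [L, d]
      rw [Finsupp.linearCombination_single, Pi.smul_apply, lp.coeFn_smul, Pi.smul_apply,
        lp.coeFn_sub, Pi.sub_apply, pm_apply, pm_apply, Finsupp.single_apply,
        Finsupp.single_apply]
      have e : (x = s i * k) ↔ (k = (s i)⁻¹ * x) := by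
        constructor
        · rintro rfl; simp
        · rintro rfl; simp
      have e' : (x = k) ↔ (k = x) := eq_comm
      simp only [e, e', smul_eq_mul, mul_sub, mul_ite, mul_one, mul_zero]
  by_cases h0 : (0 : ι → lp (fun _ : G => ℝ) 1) ∈ closure (L '' Δ)
  · rw [Metric.mem_closure_iff] at h0
    obtain ⟨_, ⟨p, hp, rfl⟩, hd⟩ := h0 ε hε
    rw [dist_zero_left] at hd
    exact ⟨p, hp.1, hp.2.1, hp.2.2, fun i => ⟨L p i, (norm_le_pi_norm _ i).trans_lt hd, hL p i⟩⟩
  · exfalso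
    obtain ⟨f, c, hc, hf⟩ := geometric_hahn_banach_point_closed
      ((hΔ.linear_image L).closure) isClosed_closure h0
    rw [map_zero] at hc
    let φ0 : ι → G → ℝ := fun i k => f (Pi.single i (pm k))
    have hφ0 : ∀ i k, |φ0 i k| ≤ ‖f‖ := by
      intro i k
      refine (f.le_opNorm _).trans ?_
      rw [Pi.norm_single, pm_norm, mul_one]
    let t : G → G := fun g => (Quotient.mk (QuotientGroup.rightRel H) g).out
    have ht1 : ∀ g, g * (t g)⁻¹ ∈ H := by
      intro g
      have : (QuotientGroup.rightRel H) (t g) g := Quotient.exact (Quotient.out_eq _)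
      exact QuotientGroup.rightRel_apply.1 this
    have ht2 : ∀ h ∈ H, ∀ g, t (h * g) = t g := by
      intro h hh g
      simp only [t]
      congr 1
      apply Quotient.sound
      show (QuotientGroup.rightRel H) (h * g) g
      rw [QuotientGroup.rightRel_apply, mul_inv_rev, ← mul_assoc, mul_inv_cancel, one_mul]
      exact H.inv_mem hh
    refine hmean (fun i g => φ0 i (g * (t g)⁻¹)) ‖f‖ (fun i g => hφ0 _ _) c hc ?_
    intro g
    set k := g * (t g)⁻¹ with hk
    have h1 : Finsupp.single k (1 : ℝ) ∈ Δ := by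
      refine ⟨fun x => ?_, fun x hx => ?_, ?_⟩
      · rw [Finsupp.single_apply]; split_ifs <;> norm_num
      · rw [Finsupp.single_apply] at hx
        by_cases hkx : k = x
        · rw [← hkx]; exact ht1 g
        · rw [if_neg hkx] at hx; exact absurd rfl hx
      · rw [Finsupp.sum_single_index rfl]
    have h2 := (hf _ (subset_closure ⟨_, h1, rfl⟩)).le
    have h3 : L (Finsupp.single k (1 : ℝ)) = d k := by
      simp only [L]
      rw [Finsupp.linearCombination_single, one_smul]
    have h4 : d k = ∑ i, Pi.single i (d k i) := (Finset.univ_sum_single (d k)).symm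
    rw [h3, h4, map_sum] at h2
    refine h2.trans (le_of_eq (Finset.sum_congr rfl fun i _ => ?_))
    have e1 : s i * g * (t (s i * g))⁻¹ = s i * k := by
      rw [ht2 _ (hs i), hk, mul_assoc]
    rw [e1]
    simp only [φ0, d]
    rw [← map_sub, ← Pi.single_sub]


section Vec

/-- vector functional -/
def vst (ξ : ℓ²(G, ℂ)) : WeakDual ℂ (BG G) :=
  StrongDual.toWeakDual ((innerSL ℂ ξ).comp (ContinuousLinearMap.apply ℂ ℓ²(G, ℂ) ξ))

theorem vst_apply (ξ : ℓ²(G, ℂ)) (T : BG G) : vst ξ T = inner ℂ ξ (T ξ) := rfl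

theorem vst_isSt {ξ : ℓ²(G, ℂ)} (h : ‖ξ‖ = 1) : IsSt (vst ξ) := by
  constructor
  · rw [vst_apply]
    show inner ℂ ξ ξ = 1
    rw [inner_self_eq_norm_sq_to_K, h]; simp
  · intro T
    rw [vst_apply]
    show 0 ≤ inner ℂ ξ (star T (T ξ))
    rw [ContinuousLinearMap.star_eq_adjoint, ContinuousLinearMap.adjoint_inner_right,
      inner_self_eq_norm_sq_to_K]
    have : (0 : ℝ) ≤ ‖T ξ‖ ^ 2 := by positivity
    have h2 : (0 : ℂ) ≤ ((‖T ξ‖ ^ 2 : ℝ) : ℂ) := Complex.zero_le_real.2 this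
    rw [Complex.ofReal_pow] at h2
    exact h2

theorem sqrt_sub_sq_le {a b : ℝ} (ha : 0 ≤ a) (hb : 0 ≤ b) :
    (Real.sqrt a - Real.sqrt b) ^ 2 ≤ |a - b| := by
  have h1 := Real.sqrt_nonneg a
  have h2 := Real.sqrt_nonneg b
  have e : a - b = (Real.sqrt a - Real.sqrt b) * (Real.sqrt a + Real.sqrt b) := by
    have := Real.mul_self_sqrt ha
    have := Real.mul_self_sqrt hb
    nlinarith
  rw [e, abs_mul, abs_of_nonneg (add_nonneg h1 h2), ← sq_abs, sq]
  refine mul_le_mul_of_nonneg_left ?_ (abs_nonneg _)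
  rw [abs_le]; constructor <;> linarith

theorem norm_sq_eq (ξ : ℓ²(G, ℂ)) : ‖ξ‖ ^ 2 = ∑' k, ‖ξ k‖ ^ 2 := by
  have := lp.norm_rpow_eq_tsum (p := 2) (by norm_num) ξ
  simpa using this

theorem summ_sq (ξ : ℓ²(G, ℂ)) : Summable fun k => ‖ξ k‖ ^ 2 := by
  have hf : Summable fun i : G => ‖ξ i‖ ^ (2 : ℝ≥0∞).toReal :=
    (memℓp_gen_iff (by norm_num)).1 (lp.memℓp _)
  simpa using hf

theorem norm1_eq (y : lp (fun _ : G => ℝ) 1) : ‖y‖ = ∑' k, |y k| := by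
  have := lp.norm_rpow_eq_tsum (p := 1) (by norm_num) y
  simpa using this

theorem summ1 (y : lp (fun _ : G => ℝ) 1) : Summable fun k => |y k| := by
  have hf : Summable fun i : G => ‖y i‖ ^ (1 : ℝ≥0∞).toReal :=
    (memℓp_gen_iff (by norm_num)).1 (lp.memℓp _)
  simpa using hf

theorem exists_xi (H : Subgroup G) {ι : Type u} [Fintype ι] (s : ι → G) (hs : ∀ i, s i ∈ H)
    (hmean : ∀ (φ : ι → G → ℝ) (C : ℝ), (∀ i g, |φ i g| ≤ C) → ∀ c : ℝ, 0 < c →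
      (∀ g, c ≤ ∑ i, (φ i (s i * g) - φ i g)) → False) (ε : ℝ) (hε : 0 < ε) :
    ∃ ξ : ℓ²(G, ℂ), ‖ξ‖ = 1 ∧ (∀ k, ξ k ≠ 0 → k ∈ H) ∧
      ∀ i, ‖vst ξ (lreg (s i)) - 1‖ ≤ ε := by
  obtain ⟨p, hp0, hpH, hp1, hpy⟩ := day H s hs hmean (ε ^ 2) (by positivity)
  have hmem : Memℓp (fun k => ((Real.sqrt (p k) : ℝ) : ℂ)) 2 := by
    refine memℓp_gen (summable_of_ne_finset_zero (s := p.support) ?_)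
    intro k hk
    rw [Finsupp.notMem_support_iff.1 hk]
    simp
  let ξ : ℓ²(G, ℂ) := ⟨fun k => ((Real.sqrt (p k) : ℝ) : ℂ), hmem⟩
  have hξ : ∀ k, ξ k = ((Real.sqrt (p k) : ℝ) : ℂ) := fun k => rfl
  have hn2 : ‖ξ‖ ^ 2 = 1 := by
    rw [norm_sq_eq, ← hp1, Finsupp.sum, tsum_eq_sum (s := p.support)]
    · refine Finset.sum_congr rfl fun k _ => ?_
      rw [hξ, Complex.norm_real, Real.norm_of_nonneg (Real.sqrt_nonneg _), Real.sq_sqrt (hp0 k)]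
    · intro k hk
      rw [hξ, Finsupp.notMem_support_iff.1 hk]
      simp
  have hn : ‖ξ‖ = 1 := by
    have h0 := norm_nonneg ξ
    nlinarith
  refine ⟨ξ, hn, fun k hk => hpH k fun h => hk ?_, fun i => ?_⟩
  · rw [hξ, h]; simp
  · obtain ⟨y, hy1, hy2⟩ := hpy i
    have h1 : ‖lreg (s i) ξ - ξ‖ ^ 2 ≤ ε ^ 2 := by
      refine le_trans ?_ hy1.le
      rw [norm_sq_eq, norm1_eq]
      refine Summable.tsum_le_tsum (fun k => ?_) (summ_sq _) (summ1 _)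
      rw [lp.coeFn_sub, Pi.sub_apply, lreg_apply, hξ, hξ, ← Complex.ofReal_sub, Complex.norm_real,
        Real.norm_eq_abs, sq_abs, hy2]
      exact sqrt_sub_sq_le (hp0 _) (hp0 _)
    have h2 : ‖lreg (s i) ξ - ξ‖ ≤ ε := abs_le_of_sq_le_sq' h1 hε.le |>.2
    have h3 : vst ξ (lreg (s i)) - 1 = inner ℂ ξ (lreg (s i) ξ - ξ) := by
      rw [inner_sub_right, vst_apply, inner_self_eq_norm_sq_to_K, hn]; simp
    rw [h3]
    refine (norm_inner_le_norm _ _).trans ?_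
    rw [hn, one_mul]; exact h2

theorem exists_psi {z : WeakDual ℂ (BG G)} (hz : IsSt z)
    {Z : Set (WeakDual ℂ (BG G))} [CompactSpace Z] (o : G → Z) (hzZ : z ∈ Z)
    (ho : ∀ k, conjAct (lreg (G := G)) k z = z → o k = ⟨z, hzZ⟩) :
    ∃ ψ : WeakDual ℂ (BG G), IsSt ψ ∧
      (∀ h, conjAct (lreg (G := G)) h z = z → ψ (lreg h) = 1) ∧
      ∀ f, ψ (Mrep o f) = f ⟨z, hzZ⟩ := by
  classical
  let H : Subgroup G :=
    { carrier := {h | conjAct (lreg (G := G)) h z = z}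
      one_mem' := conjAct_one lreg_rep z
      mul_mem' := by
        intro a b ha hb
        have ha : conjAct (lreg (G := G)) a z = z := ha
        have hb : conjAct (lreg (G := G)) b z = z := hb
        show conjAct (lreg (G := G)) (a * b) z = z
        rw [conjAct_mul lreg_rep, hb, ha]
      inv_mem' := by
        intro a ha
        have ha : conjAct (lreg (G := G)) a z = z := ha
        show conjAct (lreg (G := G)) a⁻¹ z = z
        conv_lhs => rw [← ha]
        rw [← conjAct_mul lreg_rep, inv_mul_cancel, conjAct_one lreg_rep] }
  have hH : ∀ h, h ∈ H ↔ conjAct (lreg (G := G)) h z = z := fun h => Iff.rfl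
  let t : H × ℕ → Set (WeakDual ℂ (BG G)) := fun i =>
    {ψ | (∀ f, ψ (Mrep o f) = f ⟨z, hzZ⟩) ∧ ‖ψ (lreg i.1.1) - 1‖ ≤ 1 / ((i.2 : ℝ) + 1)}
  have htc : ∀ i, IsClosed (t i) := by
    intro i
    have h1 : IsClosed {ψ : WeakDual ℂ (BG G) | ∀ f, ψ (Mrep o f) = f ⟨z, hzZ⟩} := by
      have e : {ψ : WeakDual ℂ (BG G) | ∀ f, ψ (Mrep o f) = f ⟨z, hzZ⟩} =
        ⋂ f, {ψ : WeakDual ℂ (BG G) | ψ (Mrep o f) = f ⟨z, hzZ⟩} := by ext ψ; simp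
      rw [e]
      exact isClosed_iInter fun f => isClosed_eq (WeakDual.eval_continuous _) continuous_const
    have h2 : IsClosed {ψ : WeakDual ℂ (BG G) | ‖ψ (lreg i.1.1) - 1‖ ≤ 1 / ((i.2 : ℝ) + 1)} :=
      isClosed_le (((WeakDual.eval_continuous _).sub continuous_const).norm) continuous_const
    exact h1.inter h2
  obtain ⟨ψ, hψ1, hψ2⟩ := (isSt_compact (A := BG G)).inter_iInter_nonempty t htc (by
    intro F
    let N := F.sup Prod.snd
    obtain ⟨ξ, hξ1, hξ2, hξ3⟩ := exists_xi H (ι := F) (fun i => i.1.1.1) (fun i => i.1.1.2)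
      (fun φ C hφ c hc hcon => mean_no hz (fun i : F => i.1.1.1) (fun i => i.1.1.2) φ C hφ c hc hcon)
      (1 / ((N : ℝ) + 1)) (by positivity)
    refine ⟨vst ξ, vst_isSt hξ1, ?_⟩
    rw [Set.mem_iInter₂]
    intro i hi
    refine ⟨fun f => ?_, ?_⟩
    · have e : Mrep o f ξ = f ⟨z, hzZ⟩ • ξ := by
        apply lp.ext; funext k
        show f (o k) * ξ k = f ⟨z, hzZ⟩ * ξ k
        by_cases h : ξ k = 0
        · rw [h, mul_zero, mul_zero]
        · rw [ho k (hξ2 k h)]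
      rw [vst_apply, e, inner_smul_right, inner_self_eq_norm_sq_to_K, hξ1]; simp
    · refine (hξ3 ⟨i, hi⟩).trans ?_
      have : i.2 ≤ N := Finset.le_sup (f := Prod.snd) hi
      have : (i.2 : ℝ) ≤ N := by exact_mod_cast this
      gcongr)
  rw [Set.mem_iInter] at hψ2
  refine ⟨ψ, hψ1, fun h hh => ?_, fun f => (hψ2 (1, 0)).1 f⟩
  have h1 : ∀ n : ℕ, ‖ψ (lreg h) - 1‖ ≤ 1 / ((n : ℝ) + 1) := fun n => (hψ2 (⟨h, hh⟩, n)).2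
  have h2 : ‖ψ (lreg h) - 1‖ ≤ 0 :=
    ge_of_tendsto tendsto_one_div_add_atTop_nhds_zero_nat (Filter.Eventually.of_forall h1)
  exact sub_eq_zero.1 (norm_le_zero_iff.1 h2)

theorem direction2 (hG : IsCstarSimple G) (B : Set (WeakDual ℂ (redCstar G)))
    (hB : B ⊆ {φ | IsState φ}) (hBd : IsDualBoundary G B) : B = {tau G} := by
  by_contra hne
  obtain ⟨Z, hZ, hst, z, hzZ, s, hs1, hs⟩ := exists_Z (fun x hx => hB hx) hBd hne
  have : CompactSpace Z := isCompact_iff_compactSpace.1 hZ.cpt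
  have hcov := Mrep_cov hZ hst ⟨z, hzZ⟩
  obtain ⟨ψ, hψ, hψ1, hψ2⟩ := exists_psi (hst z hzZ) (fun k => actX hZ.inv k ⟨z, hzZ⟩) hzZ
    (fun k hk => Subtype.ext hk)
  exact absFinal hcov (j := (redCstar G).subtype) Subtype.val_injective (v := uu (G := G))
    (fun g => coe_uu g) dense_uu hG tau_isSt (fun g hg => tau_uu_ne hg) hzZ hs1 hs hψ hψ1 hψ2

end Vec

end Main

/-- A discrete group is C*-simple if and only if the only `G`-boundary contained in the state
space of `C*_λ(G)` is the singleton of the canonical trace. -/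
theorem cstarSimple_iff_unique_boundary_in_states (G : Type u) [Group G] :
    IsCstarSimple G ↔
      ∀ B : Set (WeakDual ℂ (redCstar G)),
        B ⊆ {φ | IsState φ} → IsDualBoundary G B → B = {tau G} := by
  exact ⟨fun h B hB hBd => direction2 h B hB hBd, fun H => direction1 H⟩
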